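/- arXiv:math/0112317 — 11 statements merged into one kernel-verified Lean document; each statement's English description precedes it below -/
import Mathlib

section
/- Let H be a nonzero complex Hilbert space and let A, B be bounded linear operators on H satisfying A*A − q·AA* = (1−q)·I, B*B − p·BB* = (1−p)·I, AB = BA, A*B = BA*, and (I−AA*)(I−BB*) = 0. Assume the pair is topologically irreducible: the only closed subspaces of H invariant under all four operators A, A*, B, B* are {0} and H. Then one of the following holds, where (e_k)_{k≥0} is the standard orthonormal basis of ℓ²(ℕ): (i) there exist θ ∈ [0,2π) and a unitary U : H → ℓ²(ℕ) such that U A U⁻¹ = e^{iθ}·I and (U B U⁻¹) e_k = √(1−p^{k+1}) e_{k+1} for all k ≥ 0; (ii) there exist θ ∈ [0,2π) and a unitary U : H → ℓ²(ℕ) such that (U A U⁻¹) e_k = √(1−q^{k+1}) e_{k+1} for all k ≥ 0 and U B U⁻¹ = e^{iθ}·I; (iii) H is one-dimensional and there exist θ₁, θ₂ ∈ [0,2π) such that A = e^{iθ₁}·I and B = e^{iθ₂}·I. -/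
open ContinuousLinearMap

/-- The standard orthonormal basis vectors of `ℓ²(ℕ)`. -/
noncomputable def stdBasis (k : ℕ) : lp (fun _ : ℕ => ℂ) 2 := lp.single 2 k (1 : ℂ)


section Helpers

variable {H : Type*} [NormedAddCommGroup H] [InnerProductSpace ℂ H] [CompleteSpace H]

/-- Existence of a vacuum vector. -/
lemma exists_vacuum [Nontrivial H] (p : ℝ) (hp0 : 0 < p) (hp1 : p < 1) (B : H →L[ℂ] H)
    (hB : adjoint B * B - (p : ℂ) • (B * adjoint B) = ((1 - p : ℝ) : ℂ) • (1 : H →L[ℂ] H))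
    (hne : B * adjoint B ≠ 1) : ∃ v : H, v ≠ 0 ∧ adjoint B v = 0 := by
  set P : H →L[ℂ] H := B * adjoint B with hP
  have hPsa : IsSelfAdjoint P := IsSelfAdjoint.mul_star_self B
  have hnonneg : ∀ x ∈ spectrum ℝ P, 0 ≤ x := by
    have := spectrum_star_mul_self_nonneg (b := star B)
    rw [star_star] at this
    exact this
  have hQ : adjoint B * B = cfc (fun x : ℝ => (1 - p) + p * x) P := by
    rw [cfc_const_add (1 - p) (fun x => p * x) P, cfc_const_mul p (fun x => x) P, cfc_id' ℝ P]
    rw [sub_eq_iff_eq_add] at hB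
    rw [hB, Algebra.algebraMap_eq_smul_one]
    simp only [Complex.coe_smul]
  have hspecQ : spectrum ℝ (adjoint B * B) = (fun x : ℝ => (1 - p) + p * x) '' spectrum ℝ P := by
    rw [hQ, cfc_map_spectrum (fun x : ℝ => (1 - p) + p * x) P]
  have hcomm := spectrum.nonzero_mul_comm (𝕜 := ℝ) B (adjoint B)
  have key : ∀ t ∈ spectrum ℝ P, t ≠ 0 → ∃ s ∈ spectrum ℝ P, t = (1 - p) + p * s := by
    intro t ht h0
    have : t ∈ spectrum ℝ (adjoint B * B) \ {0} := hcomm ▸ ⟨ht, h0⟩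
    rw [hspecQ] at this
    obtain ⟨s, hs, h⟩ := this.1
    exact ⟨s, hs, h.symm⟩
  have h0 : (0 : ℝ) ∈ spectrum ℝ P := by
    by_contra h0
    apply hne
    obtain ⟨M, hM⟩ := (spectrum.isCompact (𝕜 := ℝ) P).isBounded.exists_norm_le
    have hb : ∀ n : ℕ, ∀ t ∈ spectrum ℝ P, |t - 1| ≤ p ^ n * (M + 1) := by
      intro n
      induction n with
      | zero =>
        intro t ht
        have := hM t ht
        rw [Real.norm_eq_abs] at this
        calc |t - 1| ≤ |t| + |1| := abs_sub _ _
          _ ≤ _ := by simp; linarith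
      | succ n ih =>
        intro t ht
        obtain ⟨s, hs, h⟩ := key t ht (fun h => h0 (h ▸ ht))
        have e : t - 1 = p * (s - 1) := by rw [h]; ring
        rw [e, abs_mul, abs_of_pos hp0, pow_succ]
        have := mul_le_mul_of_nonneg_left (ih s hs) hp0.le
        linarith
    have hsub : spectrum ℝ P ⊆ {1} := by
      intro t ht
      have hl : Filter.Tendsto (fun n : ℕ => p ^ n * (M + 1)) Filter.atTop (nhds (0 * (M + 1))) :=
        (tendsto_pow_atTop_nhds_zero_of_lt_one hp0.le hp1).mul_const _
      rw [zero_mul] at hl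
      have h1 : |t - 1| ≤ 0 := ge_of_tendsto' hl (fun n => hb n t ht)
      have := abs_nonpos_iff.mp h1
      exact sub_eq_zero.mp this
    have := CFC.eq_algebraMap_of_spectrum_subset_singleton P (1 : ℝ) hsub
    rw [this, map_one]
  let f : ℝ → ℝ := fun x => max 0 ((1 - p) - x)
  have hf : Continuous f := by fun_prop
  have hPf : P * cfc f P = 0 := by
    have h1 : cfc (fun x : ℝ => x * f x) P = P * cfc f P := by
      rw [cfc_mul (fun x : ℝ => x) f P (by fun_prop) hf.continuousOn, cfc_id' ℝ P]
    rw [← h1]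
    rw [show (0 : H →L[ℂ] H) = cfc (fun _ : ℝ => (0 : ℝ)) P from (cfc_const_zero ℝ P).symm]
    apply cfc_congr
    intro t ht
    by_cases h : t = 0
    · simp [h]
    · obtain ⟨s, hs, e⟩ := key t ht h
      have := mul_nonneg hp0.le (hnonneg s hs)
      have : f t = 0 := max_eq_left (by linarith)
      simp [this]
  have hf0 : cfc f P ≠ 0 := by
    intro h
    rw [show (0 : H →L[ℂ] H) = cfc (fun _ : ℝ => (0 : ℝ)) P from (cfc_const_zero ℝ P).symm] at h
    have := eqOn_of_cfc_eq_cfc h (ha := hPsa) hf.continuousOn continuousOn_const h0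
    have h2 : f 0 = 1 - p := by simp [f]; linarith
    rw [h2] at this
    simp only at this
    linarith
  obtain ⟨w, hw⟩ : ∃ w, cfc f P w ≠ 0 := by
    by_contra! h
    exact hf0 (ContinuousLinearMap.ext h)
  refine ⟨cfc f P w, hw, ?_⟩
  have h1 : B (adjoint B (cfc f P w)) = 0 := by
    have := congrArg (fun T : H →L[ℂ] H => T w) hPf
    simpa [hP] using this
  rw [← norm_eq_zero, ← sq_eq_zero_iff, ← @inner_self_eq_norm_sq ℂ, adjoint_inner_left, h1]
  simp

/-- Schur's lemma for normal operators. -/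
lemma schur_normal [Nontrivial H] (S : Set (H →L[ℂ] H))
    (hirr : ∀ K : Submodule ℂ H, IsClosed (K : Set H) → (∀ T ∈ S, ∀ x ∈ K, T x ∈ K) →
      K = ⊥ ∨ K = ⊤)
    (T : H →L[ℂ] H) [hT : IsStarNormal T] (hc : ∀ R ∈ S, Commute T R)
    (hc' : ∀ R ∈ S, Commute (star T) R) : ∃ c : ℂ, T = c • 1 := by
  obtain ⟨a, ha⟩ := spectrum.nonempty T
  refine ⟨a, ?_⟩
  rw [← Algebra.algebraMap_eq_smul_one]
  apply CFC.eq_algebraMap_of_spectrum_subset_singleton T a _ hT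
  intro b hb
  by_contra hab
  rw [Set.mem_singleton_iff] at hab
  let f : ℂ → ℂ := fun z => ((max 0 (‖z - a‖ - ‖z - b‖) : ℝ) : ℂ)
  let g : ℂ → ℂ := fun z => ((max 0 (‖z - b‖ - ‖z - a‖) : ℝ) : ℂ)
  have hf : Continuous f := by fun_prop
  have hg : Continuous g := by fun_prop
  have hpos : 0 < ‖b - a‖ := norm_pos_iff.mpr (sub_ne_zero.mpr hab)
  have hpos' : 0 < ‖a - b‖ := norm_pos_iff.mpr (sub_ne_zero.mpr (Ne.symm hab))
  have hz : (0 : H →L[ℂ] H) = cfc (fun _ : ℂ => (0 : ℂ)) T := (cfc_const_zero ℂ T).symm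
  have hfg : cfc f T * cfc g T = 0 := by
    rw [← cfc_mul f g T hf.continuousOn hg.continuousOn, hz]
    apply cfc_congr
    intro z _
    rcases le_total ‖z - a‖ ‖z - b‖ with h | h
    · have : f z = 0 := by simp [f, h]
      simp [this]
    · have : g z = 0 := by simp [g, h]
      simp [this]
  have hf0 : cfc f T ≠ 0 := by
    intro h
    rw [hz] at h
    have := eqOn_of_cfc_eq_cfc h (ha := hT) hf.continuousOn continuousOn_const hb
    simp only [f, sub_self, norm_zero, sub_zero, max_eq_right hpos.le] at this
    exact hpos.ne' (by exact_mod_cast this)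
  have hg0 : cfc g T ≠ 0 := by
    intro h
    rw [hz] at h
    have := eqOn_of_cfc_eq_cfc h (ha := hT) hg.continuousOn continuousOn_const ha
    simp only [g, sub_self, norm_zero, sub_zero, max_eq_right hpos'.le] at this
    exact hpos'.ne' (by exact_mod_cast this)
  rcases hirr (LinearMap.ker (cfc f T).toLinearMap) (cfc f T).isClosed_ker (by
    intro R hR x hx
    have hcR := (hc R hR).cfc (hc' R hR) f
    have := congrArg (fun V : H →L[ℂ] H => V x) hcR.eq
    simp only [mul_apply_eq_comp] at this
    have hx' : cfc f T x = 0 := hx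
    show cfc f T (R x) = 0
    rw [this, hx', map_zero]) with h | h
  · apply hg0
    ext x
    have : cfc g T x ∈ LinearMap.ker (cfc f T).toLinearMap := by
      have := congrArg (fun V : H →L[ℂ] H => V x) hfg
      simpa using this
    rw [h] at this
    simpa using this
  · apply hf0
    ext x
    have : x ∈ LinearMap.ker (cfc f T).toLinearMap := by rw [h]; trivial
    simpa using this

/-- The weighted shift structure. -/
lemma exists_shift [Nontrivial H] (p : ℝ) (hp0 : 0 < p) (hp1 : p < 1) (B : H →L[ℂ] H)
    (hB : adjoint B * B - (p : ℂ) • (B * adjoint B) = ((1 - p : ℝ) : ℂ) • (1 : H →L[ℂ] H))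
    (hne : B * adjoint B ≠ 1)
    (hirr : ∀ K : Submodule ℂ H, IsClosed (K : Set H) →
      (∀ x ∈ K, B x ∈ K) → (∀ x ∈ K, adjoint B x ∈ K) → K = ⊥ ∨ K = ⊤) :
    ∃ U : H ≃ₗᵢ[ℂ] lp (fun _ : ℕ => ℂ) 2, ∀ k : ℕ, U (B (U.symm (stdBasis k))) =
        ((Real.sqrt (1 - p ^ (k + 1)) : ℝ) : ℂ) • stdBasis (k + 1) := by
  obtain ⟨v, hv, hBv⟩ := exists_vacuum p hp0 hp1 B hB hne
  have hrel : ∀ x, adjoint B (B x) = ((1 - p : ℝ) : ℂ) • x + (p : ℂ) • B (adjoint B x) := by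
    intro x
    rw [sub_eq_iff_eq_add] at hB
    have := congrArg (fun T : H →L[ℂ] H => T x) hB
    simpa using this
  let c : ℕ → ℝ := fun n => Real.sqrt (1 - p ^ (n + 1))
  have hlt : ∀ n : ℕ, 0 < 1 - p ^ (n + 1) := fun n =>
    sub_pos.mpr (pow_lt_one₀ hp0.le hp1 n.succ_ne_zero)
  have hc0 : ∀ n, 0 < c n := fun n => Real.sqrt_pos.mpr (hlt n)
  have hcc : ∀ n, (c n : ℂ) * (c n : ℂ) = ((1 - p ^ (n + 1) : ℝ) : ℂ) := by
    intro n
    rw [← Complex.ofReal_mul, Real.mul_self_sqrt (hlt n).le]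
  have hc0' : ∀ n, (c n : ℂ) ≠ 0 := fun n => by exact_mod_cast (hc0 n).ne'
  let e : ℕ → H := fun n => Nat.rec (((‖v‖⁻¹ : ℝ) : ℂ) • v) (fun n x => (c n : ℂ)⁻¹ • B x) n
  have he0 : e 0 = ((‖v‖⁻¹ : ℝ) : ℂ) • v := rfl
  have hes : ∀ n, e (n + 1) = (c n : ℂ)⁻¹ • B (e n) := fun n => rfl
  have hBe : ∀ n, B (e n) = (c n : ℂ) • e (n + 1) := by
    intro n
    rw [hes, smul_smul, mul_inv_cancel₀ (hc0' n), one_smul]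
  have hB0 : adjoint B (e 0) = 0 := by rw [he0, map_smul, hBv, smul_zero]
  have step : ∀ n, B (adjoint B (e n)) = ((1 - p ^ n : ℝ) : ℂ) • e n →
      adjoint B (B (e n)) = ((1 - p ^ (n + 1) : ℝ) : ℂ) • e n := by
    intro n h
    rw [hrel, h, smul_smul, ← add_smul]
    congr 1
    push_cast
    ring
  have step2 : ∀ n, B (adjoint B (e n)) = ((1 - p ^ n : ℝ) : ℂ) • e n →
      adjoint B (e (n + 1)) = (c n : ℂ) • e n := by
    intro n h
    rw [hes, map_smul, step n h, ← hcc, smul_smul, inv_mul_cancel_left₀ (hc0' n)]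
  have hBB : ∀ n, B (adjoint B (e n)) = ((1 - p ^ n : ℝ) : ℂ) • e n := by
    intro n
    induction n with
    | zero => rw [hB0]; simp
    | succ n ih => rw [step2 n ih, map_smul, hBe, smul_smul, hcc]
  have hBs : ∀ n, adjoint B (e (n + 1)) = (c n : ℂ) • e n := fun n => step2 n (hBB n)
  have hnorm : ∀ n, inner ℂ (e n) (e n) = 1 := by
    intro n
    induction n with
    | zero =>
      rw [inner_self_eq_norm_sq_to_K, he0, norm_smul]
      simp [norm_ne_zero_iff.mpr hv]
    | succ n ih =>
      have h1 : (c n : ℂ) * inner ℂ (e (n + 1)) (e (n + 1)) = (c n : ℂ) := by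
        rw [← inner_smul_right, ← hBe, ← adjoint_inner_left, hBs, inner_smul_left, ih]
        simp
      exact mul_left_cancel₀ (hc0' n) (by rw [h1, mul_one])
  have horth : ∀ i j, i ≠ j → inner ℂ (e i) (e j) = 0 := by
    intro i j hij
    have h1 : inner ℂ (B (adjoint B (e i))) (e j) = inner ℂ (e i) (B (adjoint B (e j))) := by
      exact (adjoint_inner_right B (adjoint B (e i)) (e j)).symm.trans
        (adjoint_inner_left B (adjoint B (e j)) (e i))
    rw [hBB, hBB, inner_smul_left, inner_smul_right, Complex.conj_ofReal] at h1
    by_contra h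
    have h2 := mul_right_cancel₀ h h1
    have h3 : p ^ i = p ^ j := by
      have := Complex.ofReal_injective h2
      linarith
    exact hij (pow_right_injective₀ hp0 hp1.ne h3)
  have hon : Orthonormal ℂ e := by
    rw [orthonormal_iff_ite]
    intro i j
    split_ifs with h
    · rw [h]; exact hnorm j
    · exact horth i j h
  have inv : ∀ T : H →L[ℂ] H, (∀ n, T (e n) ∈ Submodule.span ℂ (Set.range e)) →
      ∀ x ∈ (Submodule.span ℂ (Set.range e)).topologicalClosure,
        T x ∈ (Submodule.span ℂ (Set.range e)).topologicalClosure := by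
    intro T hT x hx
    have hle : Submodule.span ℂ (Set.range e) ≤
        (Submodule.span ℂ (Set.range e)).comap T.toLinearMap := by
      rw [Submodule.span_le]
      rintro _ ⟨n, rfl⟩
      exact hT n
    exact map_mem_closure T.continuous hx (fun y hy => hle hy)
  have htop : (Submodule.span ℂ (Set.range e)).topologicalClosure = ⊤ := by
    have i1 : ∀ n, B (e n) ∈ Submodule.span ℂ (Set.range e) := by
      intro n
      rw [hBe]
      exact Submodule.smul_mem _ _ (Submodule.subset_span ⟨n + 1, rfl⟩)
    have i2 : ∀ n, adjoint B (e n) ∈ Submodule.span ℂ (Set.range e) := by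
      intro n
      cases n with
      | zero => rw [hB0]; exact Submodule.zero_mem _
      | succ n =>
        rw [hBs]
        exact Submodule.smul_mem _ _ (Submodule.subset_span ⟨n, rfl⟩)
    refine (hirr _ (Submodule.isClosed_topologicalClosure _) (inv B i1)
      (inv (adjoint B) i2)).resolve_left fun h => ?_
    have h1 : e 0 ∈ (Submodule.span ℂ (Set.range e)).topologicalClosure :=
      Submodule.le_topologicalClosure _ (Submodule.subset_span ⟨0, rfl⟩)
    rw [h, Submodule.mem_bot] at h1
    have := hnorm 0
    rw [h1] at this
    simp at this
  let b : HilbertBasis ℕ ℂ H := HilbertBasis.mk hon htop.ge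
  have hbe : ∀ n, b n = e n := fun n => congrFun (HilbertBasis.coe_mk hon htop.ge) n
  have hrepr : ∀ n, b.repr (e n) = stdBasis n := by
    intro n
    rw [← hbe, b.repr_self]
    rfl
  refine ⟨b.repr, fun k => ?_⟩
  rw [← hrepr k, LinearIsometryEquiv.symm_apply_apply, hBe, map_smul]
  exact congrArg _ (hrepr (k + 1))

/-- The kernel of `1 - T T*` reduces `T` and everything commuting with `T` and `T*`. -/
lemma defect_dichotomy (p : ℝ) (hp0 : 0 < p) (A B : H →L[ℂ] H)
    (hA : adjoint A * A - (p : ℂ) • (A * adjoint A) = ((1 - p : ℝ) : ℂ) • (1 : H →L[ℂ] H))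
    (h1 : Commute A B) (h2 : Commute (adjoint A) B)
    (hirr : ∀ K : Submodule ℂ H, IsClosed (K : Set H) →
      (∀ x ∈ K, A x ∈ K) → (∀ x ∈ K, adjoint A x ∈ K) →
      (∀ x ∈ K, B x ∈ K) → (∀ x ∈ K, adjoint B x ∈ K) → K = ⊥ ∨ K = ⊤) :
    (∀ x, A (adjoint A x) = x → x = 0) ∨ A * adjoint A = 1 := by
  have hrel : ∀ x, adjoint A (A x) = ((1 - p : ℝ) : ℂ) • x + (p : ℂ) • A (adjoint A x) := by
    intro x
    rw [sub_eq_iff_eq_add] at hA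
    have := congrArg (fun T : H →L[ℂ] H => T x) hA
    simpa using this
  have h3 : Commute A (adjoint B) := by
    have := h2.star_star
    rw [← star_eq_adjoint, star_star] at this
    exact this
  have h4 : Commute (adjoint A) (adjoint B) := h1.star_star
  have hcomm : ∀ T : H →L[ℂ] H, Commute A T → Commute (adjoint A) T → ∀ x,
      A (adjoint A x) = x → A (adjoint A (T x)) = T x := by
    intro T e1 e2 x hx
    have f1 := congrArg (fun V : H →L[ℂ] H => V x) (e1.mul_left e2).eq
    simp only [mul_apply_eq_comp] at f1
    rw [f1, hx]
  have hmem : ∀ x, x ∈ LinearMap.ker (1 - A * adjoint A).toLinearMap ↔ A (adjoint A x) = x := by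
    intro x
    have : (1 - A * adjoint A : H →L[ℂ] H) x = x - A (adjoint A x) := by simp
    rw [LinearMap.mem_ker]
    change (1 - A * adjoint A : H →L[ℂ] H) x = 0 ↔ _
    rw [this, sub_eq_zero, eq_comm]
  have hor := hirr (LinearMap.ker (1 - A * adjoint A).toLinearMap)
    (1 - A * adjoint A : H →L[ℂ] H).isClosed_ker
    (by
      intro x hx
      rw [hmem] at hx ⊢
      rw [hrel, hx, ← add_smul]
      simp)
    (by
      intro x hx
      rw [hmem] at hx ⊢
      have := hrel (adjoint A x)
      rw [hx] at this
      have h5 : (p : ℂ) • A (adjoint A (adjoint A x)) = (p : ℂ) • adjoint A x := by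
        have h6 : adjoint A x = ((1 - p : ℝ) : ℂ) • adjoint A x + (p : ℂ) • adjoint A x := by
          rw [← add_smul]; simp
        exact (add_left_cancel (h6.symm.trans this)).symm
      exact smul_right_injective H (show (p : ℂ) ≠ 0 by exact_mod_cast hp0.ne') h5)
    (by
      intro x hx
      rw [hmem] at hx ⊢
      exact hcomm B h1 h2 x hx)
    (by
      intro x hx
      rw [hmem] at hx ⊢
      exact hcomm _ h3 h4 x hx)
  rcases hor with h | h
  · left
    intro x hx
    rw [← hmem, h] at hx
    simpa using hx
  · right
    ext x
    have : x ∈ LinearMap.ker (1 - A * adjoint A).toLinearMap := by rw [h]; trivial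
    rw [hmem] at this
    simpa using this

lemma exists_angle (c : ℂ) (hc : ‖c‖ = 1) :
    ∃ θ ∈ Set.Ico (0 : ℝ) (2 * Real.pi), c = Complex.exp (θ * Complex.I) := by
  have h : c = Complex.exp (c.arg * Complex.I) := by
    have := Complex.norm_mul_exp_arg_mul_I c
    rw [hc] at this
    simpa using this.symm
  have h1 := Complex.neg_pi_lt_arg c
  have h2 := Complex.arg_le_pi c
  have h3 := Real.pi_pos
  by_cases h0 : 0 ≤ c.arg
  · exact ⟨c.arg, ⟨h0, by linarith⟩, h⟩
  · refine ⟨c.arg + 2 * Real.pi, ⟨by linarith, by linarith⟩, ?_⟩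
    push_cast
    rw [add_mul, Complex.exp_add, Complex.exp_two_pi_mul_I, mul_one]
    exact h

/-- In an irreducible pair, a coisometric `A` is a phase. -/
lemma phase_of_coisometry [Nontrivial H] (q : ℝ) (A B : H →L[ℂ] H)
    (hA : adjoint A * A - (q : ℂ) • (A * adjoint A) = ((1 - q : ℝ) : ℂ) • (1 : H →L[ℂ] H))
    (h1 : Commute A B) (h2 : Commute (adjoint A) B)
    (hirr : ∀ K : Submodule ℂ H, IsClosed (K : Set H) →
      (∀ x ∈ K, A x ∈ K) → (∀ x ∈ K, adjoint A x ∈ K) →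
      (∀ x ∈ K, B x ∈ K) → (∀ x ∈ K, adjoint B x ∈ K) → K = ⊥ ∨ K = ⊤)
    (hu : A * adjoint A = 1) :
    ∃ θ ∈ Set.Ico (0 : ℝ) (2 * Real.pi), A = Complex.exp (θ * Complex.I) • (1 : H →L[ℂ] H) := by
  have hu' : adjoint A * A = 1 := by
    rw [hu, sub_eq_iff_eq_add, ← add_smul] at hA
    rw [hA]
    simp
  have h3 : Commute A (adjoint B) := by
    have := h2.star_star
    rw [← star_eq_adjoint, star_star] at this
    exact this
  have h4 : Commute (adjoint A) (adjoint B) := h1.star_star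
  have hAA : Commute (adjoint A) A := by
    rw [commute_iff_eq, hu, hu']
  have : IsStarNormal A := ⟨hAA⟩
  obtain ⟨c, hc⟩ := schur_normal {A, adjoint A, B, adjoint B}
    (fun K hK h => hirr K hK (h _ (by simp)) (h _ (by simp)) (h _ (by simp)) (h _ (by simp))) A
    (by
      rintro R (rfl | rfl | rfl | rfl)
      exacts [Commute.refl _, hAA.symm, h1, h3])
    (by
      rintro R (rfl | rfl | rfl | rfl)
      exacts [hAA, Commute.refl _, h2, h4])
  have hn : ‖c‖ = 1 := by
    have h5 : ‖A * star A‖ = ‖A‖ * ‖A‖ := CStarRing.norm_self_mul_star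
    rw [star_eq_adjoint, hu, norm_one] at h5
    have h6 : ‖A‖ = ‖c‖ := by rw [hc, norm_smul, norm_one, mul_one]
    rw [h6] at h5
    nlinarith [norm_nonneg c]
  obtain ⟨θ, hθ, rfl⟩ := exists_angle c hn
  exact ⟨θ, hθ, hc⟩

/-- The adjoint of a scalar preserves every subspace. -/
lemma scalar_invariant (c : ℂ) (A : H →L[ℂ] H) (hA : A = c • (1 : H →L[ℂ] H))
    (K : Submodule ℂ H) : (∀ x ∈ K, A x ∈ K) ∧ (∀ x ∈ K, adjoint A x ∈ K) := by
  have h : adjoint A = star c • (1 : H →L[ℂ] H) := by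
    rw [← star_eq_adjoint, hA, star_smul, star_one]
  rw [h, hA]
  exact ⟨fun x hx => K.smul_mem _ hx, fun x hx => K.smul_mem _ hx⟩

end Helpers

/-- classification of the bounded irreducible `*`-representations of
`O(S³_pq)`: infinite-dimensional ones are, up to unitary equivalence, one of the two
`S¹`-families of weighted-shift representations on `ℓ²(ℕ)`, and the remaining ones are
the one-dimensional classical points. -/
theorem stmt2 {H : Type*} [NormedAddCommGroup H] [InnerProductSpace ℂ H] [CompleteSpace H]
    [Nontrivial H] (p q : ℝ) (hp0 : 0 < p) (hp1 : p < 1) (hq0 : 0 < q) (hq1 : q < 1)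
    (A B : H →L[ℂ] H)
    (hA : adjoint A * A - (q : ℂ) • (A * adjoint A) = ((1 - q : ℝ) : ℂ) • (1 : H →L[ℂ] H))
    (hB : adjoint B * B - (p : ℂ) • (B * adjoint B) = ((1 - p : ℝ) : ℂ) • (1 : H →L[ℂ] H))
    (hab : A * B = B * A) (ha'b : adjoint A * B = B * adjoint A)
    (hkey : ((1 : H →L[ℂ] H) - A * adjoint A) * ((1 : H →L[ℂ] H) - B * adjoint B) = 0)
    (hirr : ∀ K : Submodule ℂ H, IsClosed (K : Set H) →
      (∀ x ∈ K, A x ∈ K) → (∀ x ∈ K, adjoint A x ∈ K) →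
      (∀ x ∈ K, B x ∈ K) → (∀ x ∈ K, adjoint B x ∈ K) → K = ⊥ ∨ K = ⊤) :
    (∃ θ ∈ Set.Ico (0 : ℝ) (2 * Real.pi), ∃ U : H ≃ₗᵢ[ℂ] lp (fun _ : ℕ => ℂ) 2,
      (∀ ξ : lp (fun _ : ℕ => ℂ) 2, U (A (U.symm ξ)) = Complex.exp (θ * Complex.I) • ξ) ∧
      (∀ k : ℕ, U (B (U.symm (stdBasis k))) =
        ((Real.sqrt (1 - p ^ (k + 1)) : ℝ) : ℂ) • stdBasis (k + 1))) ∨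
    (∃ θ ∈ Set.Ico (0 : ℝ) (2 * Real.pi), ∃ U : H ≃ₗᵢ[ℂ] lp (fun _ : ℕ => ℂ) 2,
      (∀ k : ℕ, U (A (U.symm (stdBasis k))) =
        ((Real.sqrt (1 - q ^ (k + 1)) : ℝ) : ℂ) • stdBasis (k + 1)) ∧
      (∀ ξ : lp (fun _ : ℕ => ℂ) 2, U (B (U.symm ξ)) = Complex.exp (θ * Complex.I) • ξ)) ∨
    (Module.finrank ℂ H = 1 ∧
      ∃ θ₁ ∈ Set.Ico (0 : ℝ) (2 * Real.pi), ∃ θ₂ ∈ Set.Ico (0 : ℝ) (2 * Real.pi),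
        A = Complex.exp (θ₁ * Complex.I) • (1 : H →L[ℂ] H) ∧
        B = Complex.exp (θ₂ * Complex.I) • (1 : H →L[ℂ] H)) := by
  have hcAB : Commute A B := hab
  have hcA'B : Commute (adjoint A) B := ha'b
  have hcBA : Commute B A := hcAB.symm
  have hcB'A : Commute (adjoint B) A := by
    have := hcA'B.star_star
    rw [← star_eq_adjoint, star_star] at this
    exact this.symm
  have hirr' : ∀ K : Submodule ℂ H, IsClosed (K : Set H) →
      (∀ x ∈ K, B x ∈ K) → (∀ x ∈ K, adjoint B x ∈ K) →
      (∀ x ∈ K, A x ∈ K) → (∀ x ∈ K, adjoint A x ∈ K) → K = ⊥ ∨ K = ⊤ :=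
    fun K hK a b c d => hirr K hK c d a b
  by_cases hAu : A * adjoint A = 1
  · obtain ⟨θ, hθ, hAθ⟩ := phase_of_coisometry q A B hA hcAB hcA'B hirr hAu
    have hinvA := scalar_invariant _ A hAθ
    by_cases hBu : B * adjoint B = 1
    · right; right
      obtain ⟨φ, hφ, hBφ⟩ := phase_of_coisometry p B A hB hcBA hcB'A hirr' hBu
      have hinvB := scalar_invariant _ B hBφ
      refine ⟨?_, θ, hθ, φ, hφ, hAθ, hBφ⟩
      obtain ⟨v, hv⟩ := exists_ne (0 : H)
      rcases hirr (Submodule.span ℂ {v}) (Submodule.closed_of_finiteDimensional _)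
        (hinvA _).1 (hinvA _).2 (hinvB _).1 (hinvB _).2 with h | h
      · exact absurd (Submodule.span_singleton_eq_bot.mp h) hv
      · rw [← finrank_top, ← h]
        exact finrank_span_singleton hv
    · left
      obtain ⟨U, hU⟩ := exists_shift p hp0 hp1 B hB hBu
        (fun K hK a b => hirr K hK (hinvA K).1 (hinvA K).2 a b)
      refine ⟨θ, hθ, U, fun ξ => ?_, hU⟩
      rw [hAθ]
      simp
  · right; left
    have hinj := (defect_dichotomy q hq0 A B hA hcAB hcA'B hirr).resolve_right hAu
    have hBu : B * adjoint B = 1 := by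
      ext x
      have h := congrArg (fun T : H →L[ℂ] H => T x) hkey
      have h2 := hinj (x - B (adjoint B x)) (by
        rw [eq_comm, ← sub_eq_zero]
        simpa using h)
      exact (sub_eq_zero.mp h2).symm
    obtain ⟨θ, hθ, hBθ⟩ := phase_of_coisometry p B A hB hcBA hcB'A hirr' hBu
    have hinvB := scalar_invariant _ B hBθ
    obtain ⟨U, hU⟩ := exists_shift q hq0 hq1 A hA hAu
      (fun K hK a b => hirr K hK a b (hinvB K).1 (hinvB K).2)
    refine ⟨θ, hθ, U, hU, fun ξ => ?_⟩
    rw [hBθ]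
    simp
end

section
/- Let H be a complex Hilbert space and B a bounded linear operator on H satisfying B*B − p·BB* = (1−p)·I. Then ‖B‖ ≤ 1; consequently 0 ≤ BB* ≤ I, the operator I − BB* is self-adjoint with 0 ≤ I − BB* ≤ I, and the spectrum of I − BB* is contained in the real interval [0,1]. -/
open scoped ComplexOrder in
open ContinuousLinearMap in
/-- if `B*B − p·BB* = (1−p)·I` on a complex Hilbert space with `0 < p < 1`,
then `‖B‖ ≤ 1`, `0 ≤ BB* ≤ I`, `I − BB*` is self-adjoint with `0 ≤ I − BB* ≤ I`, and the
spectrum of `I − BB*` is contained in `[0,1] ⊆ ℝ`. -/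
theorem stmt3 {H : Type*} [NormedAddCommGroup H] [InnerProductSpace ℂ H] [CompleteSpace H]
    (p : ℝ) (hp0 : 0 < p) (hp1 : p < 1) (B : H →L[ℂ] H)
    (hrel : adjoint B * B - (p : ℂ) • (B * adjoint B) = ((1 - p : ℝ) : ℂ) • (1 : H →L[ℂ] H)) :
    ‖B‖ ≤ 1 ∧
    (B * adjoint B).IsPositive ∧
    ((1 : H →L[ℂ] H) - B * adjoint B).IsPositive ∧
    IsSelfAdjoint ((1 : H →L[ℂ] H) - B * adjoint B) ∧
    spectrum ℂ ((1 : H →L[ℂ] H) - B * adjoint B) ⊆ Complex.ofReal '' Set.Icc (0 : ℝ) 1 := by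
  have h1 : ‖(1 : H →L[ℂ] H)‖ ≤ 1 := ContinuousLinearMap.norm_id_le
  have hs : ‖adjoint B * B‖ = ‖B‖ * ‖B‖ := CStarRing.norm_star_mul_self (x := B)
  have hs' : ‖B * adjoint B‖ = ‖B‖ * ‖B‖ := CStarRing.norm_self_mul_star (x := B)
  have hB : ‖B‖ ≤ 1 := by
    have he : adjoint B * B =
        (p : ℂ) • (B * adjoint B) + ((1 - p : ℝ) : ℂ) • (1 : H →L[ℂ] H) := by
      rw [← hrel]; abel
    have hle : ‖adjoint B * B‖ ≤ p * ‖B * adjoint B‖ + (1 - p) * ‖(1 : H →L[ℂ] H)‖ := by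
      rw [he]
      refine (norm_add_le _ _).trans ?_
      rw [norm_smul, norm_smul, Complex.norm_real, Complex.norm_real, Real.norm_of_nonneg hp0.le,
        Real.norm_of_nonneg (by linarith)]
    rw [hs, hs'] at hle
    have h2 : (1 - p) * (‖B‖ * ‖B‖) ≤ (1 - p) * 1 := by
      linarith [mul_le_mul_of_nonneg_left h1 (by linarith : 0 ≤ 1 - p)]
    have h3 : ‖B‖ * ‖B‖ ≤ 1 := le_of_mul_le_mul_left h2 (by linarith)
    nlinarith [norm_nonneg B]
  have hpos : (B * adjoint B).IsPositive := isPositive_self_comp_adjoint B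
  have hsa : IsSelfAdjoint ((1 : H →L[ℂ] H) - B * adjoint B) :=
    (IsSelfAdjoint.one _).sub hpos.isSelfAdjoint
  have hpos' : ((1 : H →L[ℂ] H) - B * adjoint B).IsPositive := by
    refine (isPositive_def' ).2 ⟨hsa, fun x => ?_⟩
    have hx : ‖adjoint B x‖ ≤ ‖x‖ := by
      refine ((adjoint B).le_opNorm x).trans ?_
      rw [LinearIsometryEquiv.norm_map]
      nlinarith [norm_nonneg x]
    have e : reApplyInnerSelf ((1 : H →L[ℂ] H) - B * adjoint B) x
        = ‖x‖ ^ 2 - ‖adjoint B x‖ ^ 2 := by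
      rw [reApplyInnerSelf_apply]
      have e1 : ((1 : H →L[ℂ] H) - B * adjoint B) x = x - B (adjoint B x) := rfl
      rw [e1, inner_sub_left, map_sub, ← adjoint_inner_right, inner_self_eq_norm_sq,
        inner_self_eq_norm_sq]
    rw [e]
    nlinarith [norm_nonneg (adjoint B x)]
  refine ⟨hB, hpos, hpos', hsa, fun z hz => ?_⟩
  have z0 : 0 ≤ z := spectrum_nonneg_of_nonneg ((nonneg_iff_isPositive _).2 hpos') hz
  have hz1 : 1 - z ∈ spectrum ℂ (B * adjoint B) := by
    rw [spectrum.mem_iff] at hz ⊢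
    intro hu
    apply hz
    have : algebraMap ℂ (H →L[ℂ] H) z - (1 - B * adjoint B)
        = -(algebraMap ℂ (H →L[ℂ] H) (1 - z) - B * adjoint B) := by
      rw [map_sub, map_one]; abel
    rw [this]
    exact hu.neg
  have z1 : 0 ≤ 1 - z := spectrum_nonneg_of_nonneg ((nonneg_iff_isPositive _).2 hpos) hz1
  rw [Complex.le_def] at z0 z1
  simp at z0 z1
  exact ⟨z.re, ⟨z0.1, z1.1⟩, Complex.ext (by simp) (by simp [← z0.2])⟩
end

section
/- Let H be a complex Hilbert space and B a bounded linear operator on H satisfying B*B − p·BB* = (1−p)·I. If λ is a real number with 0 < λ < 1 and λ lies in the spectrum of I − BB*, then λ/p also lies in the spectrum of I − BB*. -/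
open ContinuousLinearMap in
/-- if `B*B − p·BB* = (1−p)·I` with `0 < p < 1`, and `λ ∈ (0,1)` lies in the
spectrum of `I − BB*`, then so does `λ/p`. -/
theorem stmt4 {H : Type*} [NormedAddCommGroup H] [InnerProductSpace ℂ H] [CompleteSpace H]
    (p : ℝ) (hp0 : 0 < p) (hp1 : p < 1) (B : H →L[ℂ] H)
    (hrel : adjoint B * B - (p : ℂ) • (B * adjoint B) = ((1 - p : ℝ) : ℂ) • (1 : H →L[ℂ] H))
    (lam : ℝ) (hlam0 : 0 < lam) (hlam1 : lam < 1)
    (hsp : (lam : ℂ) ∈ spectrum ℂ ((1 : H →L[ℂ] H) - B * adjoint B)) :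
    ((lam / p : ℝ) : ℂ) ∈ spectrum ℂ ((1 : H →L[ℂ] H) - B * adjoint B) := by
  have hpc : (p : ℂ) ≠ 0 := by exact_mod_cast hp0.ne'
  have key : ∀ (a : H →L[ℂ] H) (z : ℂ), z ∈ spectrum ℂ (1 - a) ↔ 1 - z ∈ spectrum ℂ a := by
    intro a z
    rw [spectrum.mem_iff, spectrum.mem_iff, ← IsUnit.neg_iff]
    have : -((algebraMap ℂ (H →L[ℂ] H)) z - (1 - a))
        = (algebraMap ℂ (H →L[ℂ] H)) (1 - z) - a := by
      rw [map_sub, map_one]; abel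
    rw [this]
  rw [key] at hsp ⊢
  have hne : (1 - (lam : ℂ)) ≠ 0 := by
    have : (1 - lam : ℝ) ≠ 0 := by linarith
    exact_mod_cast this
  have h2 : (1 - (lam : ℂ)) ∈ spectrum ℂ (B * adjoint B) \ {0} := ⟨hsp, hne⟩
  rw [spectrum.nonzero_mul_comm] at h2
  have h3 := h2.1
  rw [spectrum.mem_iff] at h3 ⊢
  intro hu
  apply h3
  have e : adjoint B * B = (p : ℂ) • (B * adjoint B) + ((1 - p : ℝ) : ℂ) • (1 : H →L[ℂ] H) := by
    rw [← hrel]; abel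
  have e2 : (algebraMap ℂ (H →L[ℂ] H)) (1 - (lam : ℂ)) - adjoint B * B
      = (Units.mk0 (p : ℂ) hpc) •
        ((algebraMap ℂ (H →L[ℂ] H)) (1 - ((lam / p : ℝ) : ℂ)) - B * adjoint B) := by
    rw [e, Units.smul_def, Units.val_mk0, Algebra.algebraMap_eq_smul_one,
      Algebra.algebraMap_eq_smul_one, smul_sub, smul_smul]
    have : (p : ℂ) * (1 - ((lam / p : ℝ) : ℂ)) = (1 - (lam : ℂ)) - ((1 - p : ℝ) : ℂ) := by
      push_cast
      field_simp
      ring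
    rw [this, sub_smul _ (((1 - p : ℝ) : ℂ))]
    abel
  rw [e2]
  exact hu.smul _
end

section
/- Let H be a complex Hilbert space and B a bounded linear operator on H satisfying B*B − p·BB* = (1−p)·I. Suppose ξ ∈ H with ‖ξ‖ = 1 and (I−BB*)ξ = ξ. Then B*ξ = 0, and ‖B^{k+1}ξ‖² = (1−p^{k+1})·‖B^{k}ξ‖² for all k ≥ 0 (so B^{k}ξ ≠ 0 for all k). Consequently the vectors e_k := B^{k}ξ / ‖B^{k}ξ‖, k ≥ 0, form an orthonormal sequence in H satisfying (I−BB*)e_k = p^{k}·e_k, B e_k = √(1−p^{k+1})·e_{k+1} for all k ≥ 0, B* e_0 = 0, and B* e_k = √(1−p^{k})·e_{k−1} for all k ≥ 1. -/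
open ContinuousLinearMap in
/-- starting from a unit vector `ξ` with `(I−BB*)ξ = ξ`, the vectors
`e_k := B^k ξ / ‖B^k ξ‖` form an orthonormal sequence of eigenvectors of `I − BB*`
on which `B` and `B*` act as weighted shifts. -/
theorem stmt6 {H : Type*} [NormedAddCommGroup H] [InnerProductSpace ℂ H] [CompleteSpace H]
    (p : ℝ) (hp0 : 0 < p) (hp1 : p < 1) (B : H →L[ℂ] H)
    (hrel : adjoint B * B - (p : ℂ) • (B * adjoint B) = ((1 - p : ℝ) : ℂ) • (1 : H →L[ℂ] H))
    (ξ : H) (hξ : ‖ξ‖ = 1) (heig : ((1 : H →L[ℂ] H) - B * adjoint B) ξ = ξ) :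
    adjoint B ξ = 0 ∧
    (∀ k : ℕ, ‖(B ^ (k + 1)) ξ‖ ^ 2 = (1 - p ^ (k + 1)) * ‖(B ^ k) ξ‖ ^ 2) ∧
    (∀ k : ℕ, (B ^ k) ξ ≠ 0) ∧
    Orthonormal ℂ (fun k : ℕ => (‖(B ^ k) ξ‖⁻¹ : ℝ) • (B ^ k) ξ) ∧
    (∀ k : ℕ, ((1 : H →L[ℂ] H) - B * adjoint B) ((‖(B ^ k) ξ‖⁻¹ : ℝ) • (B ^ k) ξ) =
      ((p ^ k : ℝ) : ℂ) • ((‖(B ^ k) ξ‖⁻¹ : ℝ) • (B ^ k) ξ)) ∧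
    (∀ k : ℕ, B ((‖(B ^ k) ξ‖⁻¹ : ℝ) • (B ^ k) ξ) =
      ((Real.sqrt (1 - p ^ (k + 1)) : ℝ) : ℂ) • ((‖(B ^ (k + 1)) ξ‖⁻¹ : ℝ) • (B ^ (k + 1)) ξ)) ∧
    adjoint B ((‖(B ^ 0) ξ‖⁻¹ : ℝ) • (B ^ 0) ξ) = 0 ∧
    (∀ k : ℕ, 1 ≤ k → adjoint B ((‖(B ^ k) ξ‖⁻¹ : ℝ) • (B ^ k) ξ) =
      ((Real.sqrt (1 - p ^ k) : ℝ) : ℂ) • ((‖(B ^ (k - 1)) ξ‖⁻¹ : ℝ) • (B ^ (k - 1)) ξ)) := by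
  have hM : ∀ (S T : H →L[ℂ] H) (v : H), (S * T) v = S (T v) := fun _ _ _ => rfl
  have hO : ∀ v : H, (1 : H →L[ℂ] H) v = v := fun _ => rfl
  have hR : ∀ v : H, adjoint B (B v) = (p : ℂ) • B (adjoint B v) + ((1 - p : ℝ) : ℂ) • v := by
    intro v
    have h := congrArg (fun T : H →L[ℂ] H => T v) hrel
    simp only [sub_apply, smul_apply, hM, hO] at h
    rw [← h]; abel
  have hBB : B (adjoint B ξ) = 0 := by
    simpa [sub_apply, hM, hO] using heig
  have h0 : adjoint B ξ = 0 := by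
    have h : inner ℂ (adjoint B ξ) (adjoint B ξ) = 0 := by
      rw [adjoint_inner_left, hBB, inner_zero_right]
    exact inner_self_eq_zero.mp h
  have hs : ∀ k : ℕ, (B ^ (k + 1)) ξ = B ((B ^ k) ξ) := by
    intro k; rw [pow_succ', hM]
  have hA : ∀ k : ℕ, adjoint B ((B ^ (k + 1)) ξ) = ((1 - p ^ (k + 1) : ℝ) : ℂ) • (B ^ k) ξ := by
    intro k
    induction k with
    | zero => rw [hs, hR]; simp [h0]
    | succ k ih =>
      rw [hs (k + 1), hR, ih, map_smul, ← hs k, smul_smul, ← add_smul]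
      congr 1
      push_cast; ring
  have hN : ∀ k : ℕ, ‖(B ^ (k + 1)) ξ‖ ^ 2 = (1 - p ^ (k + 1)) * ‖(B ^ k) ξ‖ ^ 2 := by
    intro k
    have h : inner ℂ ((B ^ (k + 1)) ξ) ((B ^ (k + 1)) ξ)
        = ((1 - p ^ (k + 1) : ℝ) : ℂ) * inner ℂ ((B ^ k) ξ) ((B ^ k) ξ) := by
      conv_lhs => rw [hs k]
      rw [← adjoint_inner_right, ← hs k, hA, inner_smul_right]
    rw [inner_self_eq_norm_sq_to_K, inner_self_eq_norm_sq_to_K] at h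
    apply Complex.ofReal_injective
    push_cast
    simpa using h
  have hpos : ∀ k : ℕ, 0 < 1 - p ^ (k + 1) := fun k =>
    sub_pos.mpr (pow_lt_one₀ hp0.le hp1 (Nat.succ_ne_zero k))
  have hne : ∀ k : ℕ, (B ^ k) ξ ≠ 0 := by
    intro k
    induction k with
    | zero =>
      intro h
      have : ξ = 0 := by simpa using h
      simp [this] at hξ
    | succ k ih =>
      intro h
      have h1 := hN k
      rw [h, norm_zero] at h1
      have := mul_pos (hpos k) (pow_pos (norm_pos_iff.mpr ih) 2)
      linarith
  have hn : ∀ k : ℕ, ‖(B ^ k) ξ‖ ≠ 0 := fun k => norm_ne_zero_iff.mpr (hne k)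
  have hsq : ∀ k : ℕ, ‖(B ^ (k + 1)) ξ‖ = Real.sqrt (1 - p ^ (k + 1)) * ‖(B ^ k) ξ‖ := by
    intro k
    rw [← Real.sqrt_sq (norm_nonneg ((B ^ (k + 1)) ξ)), hN, Real.sqrt_mul (hpos k).le,
      Real.sqrt_sq (norm_nonneg _)]
  have hs0 : ∀ k : ℕ, Real.sqrt (1 - p ^ (k + 1)) ≠ 0 := fun k => (Real.sqrt_pos.mpr (hpos k)).ne'
  have horth : ∀ j k : ℕ, j < k → inner ℂ ((B ^ j) ξ) ((B ^ k) ξ) = 0 := by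
    intro j
    induction j with
    | zero =>
      intro k hk
      obtain ⟨m, rfl⟩ : ∃ m, k = m + 1 := ⟨k - 1, by omega⟩
      rw [hs m, ← adjoint_inner_left]
      simp [h0]
    | succ j ih =>
      intro k hk
      obtain ⟨m, rfl⟩ : ∃ m, k = m + 1 := ⟨k - 1, by omega⟩
      rw [hs m, ← adjoint_inner_left, hA, inner_smul_left, ih m (by omega), mul_zero]
  have hE : ∀ k : ℕ, ((1 : H →L[ℂ] H) - B * adjoint B) ((B ^ k) ξ) = ((p ^ k : ℝ) : ℂ) • (B ^ k) ξ := by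
    intro k
    cases k with
    | zero => simpa using heig
    | succ k =>
      rw [sub_apply, hM, hO, hA, map_smul, ← hs k]
      push_cast
      module
  refine ⟨h0, hN, hne, ⟨?_, ?_⟩, ?_, ?_, ?_, ?_⟩
  · intro k
    rw [norm_smul, norm_inv, norm_norm, inv_mul_cancel₀ (hn k)]
  · intro j k hjk
    simp only [← Complex.coe_smul]
    rw [inner_smul_left, inner_smul_right]
    rcases lt_or_gt_of_ne hjk with h | h
    · rw [horth j k h]; simp
    · rw [← inner_conj_symm, horth k j h]; simp
  · intro k
    simp only [← Complex.coe_smul]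
    rw [map_smul, hE, smul_comm]
  · intro k
    simp only [← Complex.coe_smul]
    rw [map_smul, ← hs k, smul_smul, ← Complex.ofReal_mul]
    congr 2
    rw [hsq k]
    have := hs0 k
    have := hn k
    field_simp
  · simp [h0]
  · intro k hk
    obtain ⟨m, rfl⟩ : ∃ m, k = m + 1 := ⟨k - 1, by omega⟩
    simp only [← Complex.coe_smul, Nat.add_sub_cancel]
    rw [map_smul, hA, smul_smul, smul_smul, ← Complex.ofReal_mul, ← Complex.ofReal_mul]
    congr 2
    rw [hsq m]
    have h1 := hs0 m
    have h2 := hn m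
    have h3 := Real.mul_self_sqrt (hpos m).le
    generalize Real.sqrt (1 - p ^ (m + 1)) = s at *
    rw [← h3]
    field_simp
end

section
/- Let H be a complex Hilbert space and B a bounded linear operator on H satisfying B*B − p·BB* = (1−p)·I. Then the spectrum of I − BB* is contained in {p^{k} : k ∈ ℕ} ∪ {0}. If moreover H ≠ {0} and I − BB* is injective, then the spectrum of I − BB* equals {p^{k} : k ∈ ℕ} ∪ {0}. -/
theorem stmt7_step {A : Type*} [Ring A] [Algebra ℂ A] (p : ℂ) (hp : p ≠ 0) (a b : A)
    (h : a * b = 1 - p • (1 - b * a)) (ν : ℂ) (hν : p * ν ≠ 1) :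
    p * ν ∈ spectrum ℂ (1 - b * a) ↔ ν ∈ spectrum ℂ (1 - b * a) := by
  have h1 : (1 - p * ν) ∈ spectrum ℂ (b * a) ↔ p * ν ∈ spectrum ℂ (1 - b * a) := by
    rw [spectrum.mem_iff, spectrum.mem_iff, ← IsUnit.neg_iff]
    have : -((algebraMap ℂ A) (1 - p * ν) - b * a)
        = (algebraMap ℂ A) (p * ν) - (1 - b * a) := by
      rw [map_sub, map_one]; abel
    rw [this]
  have h2 : (1 - p * ν) ∈ spectrum ℂ (a * b) ↔ ν ∈ spectrum ℂ (1 - b * a) := by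
    rw [spectrum.mem_iff, spectrum.mem_iff, h, ← IsUnit.neg_iff]
    have : -((algebraMap ℂ A) (1 - p * ν) - (1 - p • (1 - b * a)))
        = (Units.mk0 p hp) • ((algebraMap ℂ A) ν - (1 - b * a)) := by
      rw [Units.smul_def, Units.val_mk0, smul_sub, map_sub, map_one, map_mul,
        ← Algebra.smul_def]; simp only [smul_sub]; abel
    rw [this, isUnit_smul_iff]
  have h3 := Set.ext_iff.mp (spectrum.nonzero_mul_comm (𝕜 := ℂ) a b) (1 - p * ν)
  have h4 : (1 - p * ν) ≠ 0 := fun e => hν (sub_eq_zero.mp e).symm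
  simp only [Set.mem_sdiff, Set.mem_singleton_iff, h4, not_false_eq_true, and_true] at h3
  rw [← h1, ← h2, h3]

open ContinuousLinearMap in
/-- the spectrum of `I − BB*` is contained in `{p^k : k ∈ ℕ} ∪ {0}`, with
equality when `H ≠ {0}` and `I − BB*` is injective. -/
theorem stmt7 {H : Type*} [NormedAddCommGroup H] [InnerProductSpace ℂ H] [CompleteSpace H]
    (p : ℝ) (hp0 : 0 < p) (hp1 : p < 1) (B : H →L[ℂ] H)
    (hrel : adjoint B * B - (p : ℂ) • (B * adjoint B) = ((1 - p : ℝ) : ℂ) • (1 : H →L[ℂ] H)) :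
    spectrum ℂ ((1 : H →L[ℂ] H) - B * adjoint B) ⊆
      {z : ℂ | ∃ k : ℕ, z = ((p ^ k : ℝ) : ℂ)} ∪ {0} ∧
    (Nontrivial H → Function.Injective ⇑((1 : H →L[ℂ] H) - B * adjoint B) →
      spectrum ℂ ((1 : H →L[ℂ] H) - B * adjoint B) =
        {z : ℂ | ∃ k : ℕ, z = ((p ^ k : ℝ) : ℂ)} ∪ {0}) := by
  have hpc : (p : ℂ) ≠ 0 := by exact_mod_cast hp0.ne'
  have hab : adjoint B * B = 1 - (p : ℂ) • (1 - B * adjoint B) := by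
    rw [sub_eq_iff_eq_add] at hrel
    rw [hrel, smul_sub]
    push_cast
    rw [sub_smul, one_smul]
    abel
  have step := stmt7_step (p : ℂ) hpc (adjoint B) B hab
  have hsa : IsSelfAdjoint ((1 : H →L[ℂ] H) - B * adjoint B) := by
    apply IsSelfAdjoint.sub (IsSelfAdjoint.one _)
    exact IsSelfAdjoint.mul_star_self B
  generalize (1 : H →L[ℂ] H) - B * adjoint B = Q at *
  -- going up
  have up : ∀ k : ℕ, ∀ μ ∈ spectrum ℂ Q, (¬ ∃ k : ℕ, μ = ((p ^ k : ℝ) : ℂ)) →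
      μ / (p : ℂ) ^ k ∈ spectrum ℂ Q := by
    intro k μ hμ hne
    induction k with
    | zero => simpa using hμ
    | succ k ih =>
      have e : (p : ℂ) * (μ / (p : ℂ) ^ (k + 1)) = μ / (p : ℂ) ^ k := by
        field_simp; ring
      rw [← step _ _, e]
      · exact ih
      · rw [e]
        intro h
        apply hne
        refine ⟨k, ?_⟩
        rw [div_eq_one_iff_eq (pow_ne_zero _ hpc)] at h
        rw [h]; push_cast; rfl
  have sub : spectrum ℂ Q ⊆ {z : ℂ | ∃ k : ℕ, z = ((p ^ k : ℝ) : ℂ)} ∪ {0} := by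
    intro μ hμ
    by_contra hcon
    simp only [Set.mem_union, Set.mem_ofPred_eq, Set.mem_singleton_iff, not_or] at hcon
    obtain ⟨hne, h0⟩ := hcon
    have hb : ∀ k : ℕ, ‖μ‖ ≤ (‖Q‖ * ‖(1 : H →L[ℂ] H)‖) * p ^ k := by
      intro k
      have := spectrum.norm_le_norm_mul_of_mem (up k μ hμ hne)
      rw [norm_div, norm_pow, Complex.norm_real, Real.norm_of_nonneg hp0.le,
        div_le_iff₀ (pow_pos hp0 k)] at this
      exact this
    have ht : Filter.Tendsto (fun k : ℕ => (‖Q‖ * ‖(1 : H →L[ℂ] H)‖) * p ^ k)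
        Filter.atTop (nhds ((‖Q‖ * ‖(1 : H →L[ℂ] H)‖) * 0)) :=
      (tendsto_pow_atTop_nhds_zero_of_lt_one hp0.le hp1).const_mul _
    rw [mul_zero] at ht
    have := ge_of_tendsto' ht hb
    exact h0 (norm_le_zero_iff.mp this)
  refine ⟨sub, fun hnt hinj => Set.Subset.antisymm sub ?_⟩
  have hne1 : ∀ k : ℕ, (p : ℂ) * ((p ^ k : ℝ) : ℂ) ≠ 1 := by
    intro k h
    have h' : p * p ^ k = 1 := by exact_mod_cast h
    rw [← pow_succ'] at h'
    exact absurd h' (pow_lt_one₀ hp0.le hp1 (Nat.succ_ne_zero k)).ne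
  have iffs : ∀ k : ℕ, ((p ^ k : ℝ) : ℂ) ∈ spectrum ℂ Q ↔ (1 : ℂ) ∈ spectrum ℂ Q := by
    intro k
    induction k with
    | zero => simp
    | succ k ih =>
      rw [← ih, ← step _ (hne1 k), pow_succ']
      push_cast
      rfl
  have hone : (1 : ℂ) ∈ spectrum ℂ Q := by
    by_contra hno
    have hs : spectrum ℂ Q ⊆ {0} := by
      intro μ hμ
      rcases sub hμ with ⟨k, hk⟩ | h
      · exact absurd ((iffs k).mp (hk ▸ hμ)) hno
      · exact h
    have hQ : Q = 0 := by
      have := hsa.spectralRadius_eq_nnnorm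
      have h0 : spectralRadius ℂ Q = 0 := by
        simp only [spectralRadius, ENNReal.iSup_eq_zero]
        intro μ hμ
        have := hs hμ
        simp at this
        simp [this]
      rw [h0] at this
      simpa using this.symm
    obtain ⟨x, hx⟩ := exists_ne (0 : H)
    apply hx
    apply hinj
    simp [hQ]
  have hall : ∀ k : ℕ, ((p ^ k : ℝ) : ℂ) ∈ spectrum ℂ Q := fun k => (iffs k).mpr hone
  rintro z (⟨k, rfl⟩ | hz)
  · exact hall k
  · rw [Set.mem_singleton_iff] at hz
    rw [hz]
    have ht : Filter.Tendsto (fun k : ℕ => ((p ^ k : ℝ) : ℂ)) Filter.atTop (nhds ((0 : ℝ) : ℂ)) :=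
      (Complex.continuous_ofReal.tendsto 0).comp
        (tendsto_pow_atTop_nhds_zero_of_lt_one hp0.le hp1)
    rw [Complex.ofReal_zero] at ht
    exact (spectrum.isClosed Q).mem_of_tendsto ht (Filter.Eventually.of_forall hall)
end

section
/- In O(S³_pq), for μ ∈ ℤ set a_μ := a^{μ} if μ ≥ 0 and a_μ := (a*)^{|μ|} if μ < 0, and define b_ν analogously for ν ∈ ℤ. Then the family { a_μ (1−aa*)^{m} (1−bb*)^{n} b_ν : μ, ν ∈ ℤ, m, n ∈ ℕ, m·n = 0 } is a basis of O(S³_pq) as a ℂ-vector space (it is linearly independent and spans O(S³_pq)). -/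
noncomputable section

namespace S3pq

/-- Free unital ℂ-algebra on the four generators `a, a*, b, b*`. -/
abbrev FA := FreeAlgebra ℂ (Fin 4)

/-- The generator `a`. -/
def Ag : FA := FreeAlgebra.ι ℂ 0
/-- The generator `a' = a*`. -/
def Ag' : FA := FreeAlgebra.ι ℂ 1
/-- The generator `b`. -/
def Bg : FA := FreeAlgebra.ι ℂ 2
/-- The generator `b' = b*`. -/
def Bg' : FA := FreeAlgebra.ι ℂ 3

/-- The defining relations of `O(S³_pq)`:
`a*a = q·aa* + (1−q)·1`, `b*b = p·bb* + (1−p)·1`, `a, a*` commute with `b, b*`,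
and `(1−aa*)(1−bb*) = 0`. -/
inductive Rel (p q : ℝ) : FA → FA → Prop
  | ra : Rel p q (Ag' * Ag) ((q : ℂ) • (Ag * Ag') + ((1 - q : ℝ) : ℂ) • 1)
  | rb : Rel p q (Bg' * Bg) ((p : ℂ) • (Bg * Bg') + ((1 - p : ℝ) : ℂ) • 1)
  | rab : Rel p q (Ag * Bg) (Bg * Ag)
  | rab' : Rel p q (Ag * Bg') (Bg' * Ag)
  | ra'b : Rel p q (Ag' * Bg) (Bg * Ag')
  | ra'b' : Rel p q (Ag' * Bg') (Bg' * Ag')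
  | rkey : Rel p q ((1 - Ag * Ag') * (1 - Bg * Bg')) 0

/-- The coordinate algebra `O(S³_pq)` as the quotient of the free algebra by the two-sided
ideal generated by the relations. -/
abbrev O (p q : ℝ) := RingQuot (Rel p q)

variable (p q : ℝ)

/-- `a ∈ O(S³_pq)`. -/
def a : O p q := RingQuot.mkAlgHom ℂ (Rel p q) Ag
/-- `a* ∈ O(S³_pq)`. -/
def a' : O p q := RingQuot.mkAlgHom ℂ (Rel p q) Ag'
/-- `b ∈ O(S³_pq)`. -/
def b : O p q := RingQuot.mkAlgHom ℂ (Rel p q) Bg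
/-- `b* ∈ O(S³_pq)`. -/
def b' : O p q := RingQuot.mkAlgHom ℂ (Rel p q) Bg'

/-- `a_μ := a^μ` for `μ ≥ 0` and `(a*)^{|μ|}` for `μ < 0`. -/
def apow (μ : ℤ) : O p q := if 0 ≤ μ then a p q ^ μ.toNat else a' p q ^ (-μ).toNat

/-- `b_ν := b^ν` for `ν ≥ 0` and `(b*)^{|ν|}` for `ν < 0`. -/
def bpow (ν : ℤ) : O p q := if 0 ≤ ν then b p q ^ ν.toNat else b' p q ^ (-ν).toNat

/-- The element `a_μ (1−aa*)^m (1−bb*)^n b_ν` of `O(S³_pq)`. -/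
def basisElem (t : ℤ × ℤ × ℕ × ℕ) : O p q :=
  apow p q t.1 * (1 - a p q * a' p q) ^ t.2.2.1 * (1 - b p q * b' p q) ^ t.2.2.2 * bpow p q t.2.1


section relations

lemma rel_a : a' p q * a p q = (q : ℂ) • (a p q * a' p q) + (1 - q : ℂ) • 1 := by
  have h := RingQuot.mkAlgHom_rel ℂ (Rel.ra (p := p) (q := q))
  simp only [map_mul, map_add, map_smul, map_one, Complex.ofReal_sub, Complex.ofReal_one] at h
  exact h

lemma rel_b : b' p q * b p q = (p : ℂ) • (b p q * b' p q) + (1 - p : ℂ) • 1 := by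
  have h := RingQuot.mkAlgHom_rel ℂ (Rel.rb (p := p) (q := q))
  simp only [map_mul, map_add, map_smul, map_one, Complex.ofReal_sub, Complex.ofReal_one] at h
  exact h

lemma rel_ab : Commute (a p q) (b p q) := by
  have h := RingQuot.mkAlgHom_rel ℂ (Rel.rab (p := p) (q := q))
  rw [map_mul, map_mul] at h
  exact h

lemma rel_ab' : Commute (a p q) (b' p q) := by
  have h := RingQuot.mkAlgHom_rel ℂ (Rel.rab' (p := p) (q := q))
  rw [map_mul, map_mul] at h
  exact h

lemma rel_a'b : Commute (a' p q) (b p q) := by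
  have h := RingQuot.mkAlgHom_rel ℂ (Rel.ra'b (p := p) (q := q))
  rw [map_mul, map_mul] at h
  exact h

lemma rel_a'b' : Commute (a' p q) (b' p q) := by
  have h := RingQuot.mkAlgHom_rel ℂ (Rel.ra'b' (p := p) (q := q))
  rw [map_mul, map_mul] at h
  exact h

lemma rel_key : (1 - a p q * a' p q) * (1 - b p q * b' p q) = 0 := by
  have h := RingQuot.mkAlgHom_rel ℂ (Rel.rkey (p := p) (q := q))
  simpa [a, a', b, b'] using h

end relations

/-- Integer-indexed powers in a general algebra. -/
def ipow {R : Type*} [Ring R] (x x' : R) (μ : ℤ) : R :=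
  if 0 ≤ μ then x ^ μ.toNat else x' ^ (-μ).toNat

section disc

variable {R : Type*} [Ring R] [Algebra ℂ R] (x x' : R) (r : ℂ)

lemma disc_comm (h : x' * x = r • (x * x') + (1 - r) • 1) :
    (1 - x * x') * x = r • (x * (1 - x * x')) := by
  rw [sub_mul, mul_assoc, h]
  simp only [mul_add, mul_sub, mul_smul_comm, smul_sub, sub_smul, one_smul, mul_one, one_mul]
  abel

lemma disc_comm' (h : x' * x = r • (x * x') + (1 - r) • 1) :
    x' * (1 - x * x') = r • ((1 - x * x') * x') := by
  rw [mul_sub, ← mul_assoc, h]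
  simp only [add_mul, sub_mul, smul_mul_assoc, smul_sub, sub_smul, one_smul, mul_one, one_mul]
  abel

lemma disc_pow (h : x' * x = r • (x * x') + (1 - r) • 1) (k : ℕ) :
    (1 - x * x') * x ^ k = r ^ k • (x ^ k * (1 - x * x')) := by
  induction k with
  | zero => simp
  | succ k ih =>
    rw [pow_succ, ← mul_assoc, ih, smul_mul_assoc, mul_assoc, disc_comm x x' r h, mul_smul_comm,
      smul_smul, pow_succ, mul_assoc]

lemma disc_pow' (h : x' * x = r • (x * x') + (1 - r) • 1) (k : ℕ) :
    x' ^ k * (1 - x * x') = r ^ k • ((1 - x * x') * x' ^ k) := by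
  induction k with
  | zero => simp
  | succ k ih =>
    rw [pow_succ', mul_assoc, ih, mul_smul_comm, ← mul_assoc, disc_comm' x x' r h, smul_mul_assoc,
      smul_smul, pow_succ, mul_assoc]

/-- Left multiplication by `x` on integer powers. -/
lemma disc_left (h : x' * x = r • (x * x') + (1 - r) • 1) (hr : r ≠ 0) (μ : ℤ) :
    ∃ c : ℂ, x * ipow x x' μ = ipow x x' (μ + 1) + c • (ipow x x' (μ + 1) * (1 - x * x')) := by
  by_cases hμ : 0 ≤ μ
  · refine ⟨0, ?_⟩
    have h1 : (μ + 1).toNat = μ.toNat + 1 := by omega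
    rw [ipow, ipow, if_pos hμ, if_pos (by omega), h1, zero_smul, add_zero, pow_succ']
  · obtain ⟨k, rfl⟩ : ∃ k : ℕ, μ = -(k + 1 : ℕ) := ⟨(-μ - 1).toNat, by omega⟩
    have e1 : ipow x x' (-(k + 1 : ℕ)) = x' ^ (k + 1) := by
      rw [ipow, if_neg (by omega)]; congr 1
    have e2 : ipow x x' (-(k + 1 : ℕ) + 1) = x' ^ k := by
      rw [ipow]; split_ifs with hk
      · have : k = 0 := by omega
        subst this; simp
      · congr 1; omega
    rw [e1, e2]
    refine ⟨-(r ^ k)⁻¹, ?_⟩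
    rw [disc_pow' x x' r h k, neg_smul, smul_smul, inv_mul_cancel₀ (pow_ne_zero _ hr), one_smul,
      pow_succ', sub_mul, one_mul, mul_assoc]
    abel

/-- Left multiplication by `x'` on integer powers. -/
lemma disc_left' (h : x' * x = r • (x * x') + (1 - r) • 1) (μ : ℤ) :
    ∃ c : ℂ, x' * ipow x x' μ = ipow x x' (μ - 1) + c • (ipow x x' (μ - 1) * (1 - x * x')) := by
  by_cases hμ : μ ≤ 0
  · refine ⟨0, ?_⟩
    obtain ⟨k, rfl⟩ : ∃ k : ℕ, μ = -k := ⟨(-μ).toNat, by omega⟩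
    have e1 : ipow x x' (-(k : ℤ)) = x' ^ k := by
      rw [ipow]; split_ifs with hk
      · have : k = 0 := by omega
        subst this; simp
      · congr 1; omega
    have e2 : ipow x x' (-(k : ℤ) - 1) = x' ^ (k + 1) := by
      rw [ipow, if_neg (by omega)]; congr 1; omega
    rw [e1, e2, zero_smul, add_zero, pow_succ']
  · obtain ⟨k, rfl⟩ : ∃ k : ℕ, μ = (k + 1 : ℕ) := ⟨(μ - 1).toNat, by omega⟩
    have e1 : ipow x x' ((k + 1 : ℕ) : ℤ) = x ^ (k + 1) := by
      rw [ipow, if_pos (by omega)]; rfl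
    have e2 : ipow x x' (((k + 1 : ℕ) : ℤ) - 1) = x ^ k := by
      rw [ipow, if_pos (by omega)]; congr 1; omega
    rw [e1, e2]
    refine ⟨-(r * r ^ k), ?_⟩
    rw [neg_smul, mul_smul, ← disc_pow x x' r h k, pow_succ', ← mul_assoc, h]
    simp only [add_mul, sub_mul, smul_mul_assoc, smul_sub, sub_smul, one_smul, one_mul]
    abel

end disc

lemma apow_eq (μ : ℤ) : apow p q μ = ipow (a p q) (a' p q) μ := rfl
lemma bpow_eq (μ : ℤ) : bpow p q μ = ipow (b p q) (b' p q) μ := rfl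

/-- The span of the unrestricted family. -/
def W : Submodule ℂ (O p q) := Submodule.span ℂ (Set.range (basisElem p q))

lemma mem_W (μ ν : ℤ) (m n : ℕ) :
    apow p q μ * (1 - a p q * a' p q) ^ m * (1 - b p q * b' p q) ^ n * bpow p q ν ∈ W p q :=
  Submodule.subset_span ⟨(μ, ν, m, n), rfl⟩

lemma comm_ipow {R : Type*} [Ring R] {y x x' : R} (h : Commute y x) (h' : Commute y x') (μ : ℤ) :
    Commute y (ipow x x' μ) := by
  rw [ipow]; split_ifs
  · exact h.pow_right _
  · exact h'.pow_right _

lemma a_mul_W (hq : q ≠ 0) (t) : a p q * basisElem p q t ∈ W p q := by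
  obtain ⟨μ, ν, m, n⟩ := t
  obtain ⟨c, hc⟩ := disc_left (a p q) (a' p q) q (rel_a p q) (by exact_mod_cast hq) μ
  have : a p q * basisElem p q (μ, ν, m, n) =
      apow p q (μ + 1) * (1 - a p q * a' p q) ^ m * (1 - b p q * b' p q) ^ n * bpow p q ν +
      c • (apow p q (μ + 1) * (1 - a p q * a' p q) ^ (m + 1) * (1 - b p q * b' p q) ^ n *
        bpow p q ν) := by
    simp only [basisElem, ← mul_assoc]
    rw [apow_eq, apow_eq, hc, pow_succ']
    simp only [add_mul, smul_mul_assoc, mul_assoc]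
  rw [this]
  exact add_mem (mem_W _ _ _ _ _ _) (Submodule.smul_mem _ _ (mem_W _ _ _ _ _ _))

lemma a'_mul_W (t) : a' p q * basisElem p q t ∈ W p q := by
  obtain ⟨μ, ν, m, n⟩ := t
  obtain ⟨c, hc⟩ := disc_left' (a p q) (a' p q) q (rel_a p q) μ
  have : a' p q * basisElem p q (μ, ν, m, n) =
      apow p q (μ - 1) * (1 - a p q * a' p q) ^ m * (1 - b p q * b' p q) ^ n * bpow p q ν +
      c • (apow p q (μ - 1) * (1 - a p q * a' p q) ^ (m + 1) * (1 - b p q * b' p q) ^ n *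
        bpow p q ν) := by
    simp only [basisElem, ← mul_assoc]
    rw [apow_eq, apow_eq, hc, pow_succ']
    simp only [add_mul, smul_mul_assoc, mul_assoc]
  rw [this]
  exact add_mem (mem_W _ _ _ _ _ _) (Submodule.smul_mem _ _ (mem_W _ _ _ _ _ _))

lemma scomm_pow {R : Type*} [Ring R] [Algebra ℂ R] {y z : R} {d : ℂ} (h : y * z = d • (z * y))
    (n : ℕ) : y * z ^ n = d ^ n • (z ^ n * y) := by
  induction n with
  | zero => simp
  | succ n ih =>
    rw [pow_succ, ← mul_assoc, ih, smul_mul_assoc, mul_assoc, h, mul_smul_comm,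
      smul_smul, pow_succ, mul_assoc]

/-- Passing an element through the left part. -/
lemma pass_W (y : O p q) (d : ℂ) (ν ν' : ℤ) (c : ℂ) (μ : ℤ) (m n : ℕ)
    (h1 : Commute y (a p q)) (h2 : Commute y (a' p q))
    (h3 : y * (1 - b p q * b' p q) = d • ((1 - b p q * b' p q) * y))
    (h4 : y * bpow p q ν = bpow p q ν' + c • ((1 - b p q * b' p q) * bpow p q ν')) :
    y * basisElem p q (μ, ν, m, n) ∈ W p q := by
  have e1 : Commute y (apow p q μ * (1 - a p q * a' p q) ^ m) :=
    (comm_ipow h1 h2 μ).mul_right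
      (((Commute.one_right y).sub_right (h1.mul_right h2)).pow_right m)
  have : y * basisElem p q (μ, ν, m, n) =
      d ^ n • (apow p q μ * (1 - a p q * a' p q) ^ m * (1 - b p q * b' p q) ^ n * bpow p q ν' +
      c • (apow p q μ * (1 - a p q * a' p q) ^ m * (1 - b p q * b' p q) ^ (n + 1) *
        bpow p q ν')) := by
    simp only [basisElem]
    rw [mul_assoc _ _ (bpow p q ν), ← mul_assoc y, e1.eq, mul_assoc _ y, ← mul_assoc y,
      scomm_pow h3, smul_mul_assoc, mul_assoc _ y, h4, pow_succ]
    simp only [mul_add, mul_smul_comm, mul_assoc]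
  rw [this]
  exact Submodule.smul_mem _ _ (add_mem (mem_W _ _ _ _ _ _) (Submodule.smul_mem _ _ (mem_W _ _ _ _ _ _)))

/-- integer powers commute past `1 - x x'` up to a nonzero scalar -/
lemma ipow_comm {R : Type*} [Ring R] [Algebra ℂ R] (x x' : R) (r : ℂ)
    (h : x' * x = r • (x * x') + (1 - r) • 1) (hr : r ≠ 0) (μ : ℤ) :
    ∃ c : ℂ, ipow x x' μ * (1 - x * x') = c • ((1 - x * x') * ipow x x' μ) := by
  rw [ipow]; split_ifs
  · refine ⟨(r ^ μ.toNat)⁻¹, ?_⟩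
    rw [disc_pow x x' r h, smul_smul, inv_mul_cancel₀ (pow_ne_zero _ hr), one_smul]
  · exact ⟨_, disc_pow' x x' r h _⟩

lemma b_mul_W (hp : p ≠ 0) (t) : b p q * basisElem p q t ∈ W p q := by
  obtain ⟨μ, ν, m, n⟩ := t
  have hp' : (p : ℂ) ≠ 0 := by exact_mod_cast hp
  obtain ⟨c, hc⟩ := disc_left (b p q) (b' p q) p (rel_b p q) hp' ν
  obtain ⟨e, he⟩ := ipow_comm (b p q) (b' p q) p (rel_b p q) hp' (ν + 1)
  rw [he, smul_smul] at hc
  refine pass_W p q _ (p : ℂ)⁻¹ ν (ν + 1) _ μ m n (rel_ab p q).symm (rel_a'b p q).symm ?_ hc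
  rw [disc_comm _ _ _ (rel_b p q), smul_smul, inv_mul_cancel₀ hp', one_smul]

lemma b'_mul_W (hp : p ≠ 0) (t) : b' p q * basisElem p q t ∈ W p q := by
  obtain ⟨μ, ν, m, n⟩ := t
  have hp' : (p : ℂ) ≠ 0 := by exact_mod_cast hp
  obtain ⟨c, hc⟩ := disc_left' (b p q) (b' p q) p (rel_b p q) ν
  obtain ⟨e, he⟩ := ipow_comm (b p q) (b' p q) p (rel_b p q) hp' (ν - 1)
  rw [he, smul_smul] at hc
  exact pass_W p q _ (p : ℂ) ν (ν - 1) _ μ m n (rel_ab' p q).symm (rel_a'b' p q).symm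
    (disc_comm' _ _ _ (rel_b p q)) hc

lemma gen_mul_W (hp : p ≠ 0) (hq : q ≠ 0) (i : Fin 4) (w : O p q) (hw : w ∈ W p q) :
    RingQuot.mkAlgHom ℂ (Rel p q) (FreeAlgebra.ι ℂ i) * w ∈ W p q := by
  induction hw using Submodule.span_induction with
  | mem x hx =>
    obtain ⟨t, rfl⟩ := hx
    fin_cases i
    · exact a_mul_W p q hq t
    · exact a'_mul_W p q t
    · exact b_mul_W p q hp t
    · exact b'_mul_W p q hp t
  | zero => simp
  | add x y _ _ hx hy => rw [mul_add]; exact add_mem hx hy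
  | smul c x _ hx => rw [mul_smul_comm]; exact Submodule.smul_mem _ _ hx

lemma all_mul_W (hp : p ≠ 0) (hq : q ≠ 0) (f : FA) :
    ∀ w ∈ W p q, RingQuot.mkAlgHom ℂ (Rel p q) f * w ∈ W p q := by
  induction f using FreeAlgebra.induction with
  | grade0 r =>
    intro w hw
    rw [AlgHom.commutes, ← Algebra.smul_def]
    exact Submodule.smul_mem _ _ hw
  | grade1 i => exact gen_mul_W p q hp hq i
  | mul x y hx hy =>
    intro w hw
    rw [map_mul, mul_assoc]
    exact hx _ (hy _ hw)
  | add x y hx hy =>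
    intro w hw
    rw [map_add, add_mul]
    exact add_mem (hx _ hw) (hy _ hw)

lemma W_top (hp : p ≠ 0) (hq : q ≠ 0) : W p q = ⊤ := by
  rw [eq_top_iff]
  intro x _
  obtain ⟨f, rfl⟩ := RingQuot.mkAlgHom_surjective ℂ (Rel p q) x
  have h1 : (1 : O p q) ∈ W p q := by
    have := mem_W p q 0 0 0 0
    simpa [apow, bpow] using this
  simpa using all_mul_W p q hp hq f 1 h1

lemma basisElem_zero (t : ℤ × ℤ × ℕ × ℕ) (h : t.2.2.1 * t.2.2.2 ≠ 0) : basisElem p q t = 0 := by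
  obtain ⟨μ, ν, m, n⟩ := t
  obtain ⟨hm, hn⟩ := mul_ne_zero_iff.1 h
  obtain ⟨m, rfl⟩ := Nat.exists_eq_succ_of_ne_zero hm
  obtain ⟨n, rfl⟩ := Nat.exists_eq_succ_of_ne_zero hn
  simp only [basisElem, Nat.succ_eq_add_one]
  rw [pow_succ _ m, pow_succ' _ n]
  have : apow p q μ * ((1 - a p q * a' p q) ^ m * (1 - a p q * a' p q)) *
      ((1 - b p q * b' p q) * (1 - b p q * b' p q) ^ n) * bpow p q ν =
      apow p q μ * (1 - a p q * a' p q) ^ m * ((1 - a p q * a' p q) *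
      (1 - b p q * b' p q)) * (1 - b p q * b' p q) ^ n * bpow p q ν := by
    simp only [mul_assoc]
  rw [this, rel_key]; simp

lemma span_top (hp : p ≠ 0) (hq : q ≠ 0) :
    Submodule.span ℂ
      (Set.range (fun t : {x : ℤ × ℤ × ℕ × ℕ // x.2.2.1 * x.2.2.2 = 0} => basisElem p q t.1))
      = ⊤ := by
  rw [eq_top_iff, ← W_top p q hp hq, W, Submodule.span_le]
  rintro _ ⟨t, rfl⟩
  by_cases h : t.2.2.1 * t.2.2.2 = 0
  · exact Submodule.subset_span ⟨⟨t, h⟩, rfl⟩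
  · rw [basisElem_zero p q t h]; exact zero_mem _

/-! ### Representations -/

open Polynomial in
/-- The representation space. -/
abbrev V := ℤ → ℤ → ℂ[X]

section rep
open Polynomial

variable (r : ℂ)

/-- shift -/
def opS : Module.End ℂ V where
  toFun f := fun μ ν => f (μ - 1) ν
  map_add' _ _ := rfl
  map_smul' _ _ := rfl

/-- weighted backward shift -/
def opS' : Module.End ℂ V where
  toFun f := fun μ ν => (1 - C (r ^ (μ + 1)) * X) * f (μ + 1) ν
  map_add' f g := by funext μ ν; simp [mul_add]
  map_smul' c f := by funext μ ν; simp

/-- shift in the second variable -/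
def opU : Module.End ℂ V where
  toFun f := fun μ ν => f μ (ν - 1)
  map_add' _ _ := rfl
  map_smul' _ _ := rfl

/-- backward shift in the second variable -/
def opU' : Module.End ℂ V where
  toFun f := fun μ ν => f μ (ν + 1)
  map_add' _ _ := rfl
  map_smul' _ _ := rfl

lemma opS_app (f : V) (μ ν) : opS f μ ν = f (μ - 1) ν := rfl
lemma opS'_app (f : V) (μ ν) :
    opS' r f μ ν = (1 - C (r ^ (μ + 1)) * X) * f (μ + 1) ν := rfl
lemma opU_app (f : V) (μ ν) : opU f μ ν = f μ (ν - 1) := rfl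
lemma opU'_app (f : V) (μ ν) : opU' f μ ν = f μ (ν + 1) := rfl

lemma SS' (hr : r ≠ 0) : opS' r * opS = r • (opS * opS' r) + (1 - r) • 1 := by
  refine LinearMap.ext fun f => funext fun μ => funext fun ν => ?_
  simp only [Module.End.mul_apply, LinearMap.add_apply, LinearMap.smul_apply, Pi.add_apply,
    Pi.smul_apply, opS_app, opS'_app, Module.End.one_apply, sub_add_cancel, add_sub_cancel_right,
    smul_eq_C_mul, zpow_add_one₀ hr, C_mul, C_sub, C_1]
  ring

lemma UU' : opU' * opU = 1 := by
  refine LinearMap.ext fun f => funext fun μ => funext fun ν => ?_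
  simp [opU_app, opU'_app]

lemma UU : opU * opU' = 1 := by
  refine LinearMap.ext fun f => funext fun μ => funext fun ν => ?_
  simp [opU_app, opU'_app]

/-- delta function -/
def D (μ ν : ℤ) (f : ℂ[X]) : V := fun x y => if x = μ ∧ y = ν then f else 0

lemma S_D (μ ν f) : opS (D μ ν f) = D (μ + 1) ν f := by
  funext x y; simp only [opS_app, D, sub_eq_iff_eq_add]

lemma S'_D (μ ν f) : opS' r (D μ ν f) = D (μ - 1) ν ((1 - C (r ^ μ) * X) * f) := by
  funext x y; simp only [opS'_app, D, eq_sub_iff_add_eq]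
  split_ifs with h
  · rw [h.1]
  · simp

lemma U_D (μ ν f) : opU (D μ ν f) = D μ (ν + 1) f := by
  funext x y; simp only [opU_app, D, sub_eq_iff_eq_add]

lemma U'_D (μ ν f) : opU' (D μ ν f) = D μ (ν - 1) f := by
  funext x y; simp only [opU'_app, D, eq_sub_iff_add_eq]

lemma N_D (μ ν f) : (1 - opS * opS' r) (D μ ν f) = D μ ν (C (r ^ μ) * X * f) := by
  rw [LinearMap.sub_apply, Module.End.mul_apply, S'_D, S_D, sub_add_cancel]
  funext x y
  simp only [D, Module.End.one_apply, Pi.sub_apply]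
  split_ifs <;> ring

lemma Npow_D (μ ν f) (m : ℕ) :
    ((1 - opS * opS' r) ^ m) (D μ ν f) = D μ ν (C ((r ^ μ) ^ m) * X ^ m * f) := by
  induction m with
  | zero => simp
  | succ m ih => rw [pow_succ', Module.End.mul_apply, ih, N_D]; congr 1; simp only [C_pow]; ring

lemma Uipow_D (μ f) (ν : ℤ) (ν₀ : ℤ) : ipow opU opU' ν (D μ ν₀ f) = D μ (ν₀ + ν) f := by
  have h1 : ∀ k : ℕ, (opU ^ k) (D μ ν₀ f) = D μ (ν₀ + k) f := by
    intro k
    induction k with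
    | zero => simp
    | succ k ih => rw [pow_succ', Module.End.mul_apply, ih, U_D]; congr 1; push_cast; ring
  have h2 : ∀ k : ℕ, (opU' ^ k) (D μ ν₀ f) = D μ (ν₀ - k) f := by
    intro k
    induction k with
    | zero => simp
    | succ k ih => rw [pow_succ', Module.End.mul_apply, ih, U'_D]; congr 1; push_cast; ring
  rw [ipow]; split_ifs
  · rw [h1]; congr 1; omega
  · rw [h2]; congr 1; omega

lemma fac_ne (c : ℂ) : (1 - C c * X : ℂ[X]) ≠ 0 := by
  intro h
  have := congrArg (Polynomial.eval 0) h
  simp at this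

/-- The polynomial factors. -/
lemma Sipow_D (μ : ℤ) : ∃ P : ℂ[X], P ≠ 0 ∧ ∀ ν f,
    ipow opS (opS' r) μ (D 0 ν f) = D μ ν (P * f) := by
  have h1 : ∀ k : ℕ, ∀ ν f, (opS ^ k) (D 0 ν f) = D k ν f := by
    intro k
    induction k with
    | zero => simp
    | succ k ih => intro ν f; rw [pow_succ', Module.End.mul_apply, ih, S_D]; congr 1
  have h2 : ∀ k : ℕ, ∃ P : ℂ[X], P ≠ 0 ∧ ∀ ν f, (opS' r ^ k) (D 0 ν f) = D (-k) ν (P * f) := by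
    intro k
    induction k with
    | zero => exact ⟨1, one_ne_zero, by simp⟩
    | succ k ih =>
      obtain ⟨P, hP, h⟩ := ih
      refine ⟨_, mul_ne_zero (fac_ne (r ^ (-(k : ℤ)))) hP, fun ν f => ?_⟩
      rw [pow_succ', Module.End.mul_apply, h, S'_D, mul_assoc]; congr 1; push_cast; ring
  rw [ipow]; split_ifs with h
  · refine ⟨1, one_ne_zero, fun ν f => ?_⟩
    rw [h1, one_mul]; congr 1; omega
  · obtain ⟨P, hP, h'⟩ := h2 (-μ).toNat
    refine ⟨P, hP, fun ν f => ?_⟩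
    rw [h']; congr 1; omega

/-- Lift of operators satisfying the relations. -/
lemma exists_lift (x x' y y' : Module.End ℂ V)
    (h1 : x' * x = (q : ℂ) • (x * x') + (1 - q : ℂ) • 1)
    (h2 : y' * y = (p : ℂ) • (y * y') + (1 - p : ℂ) • 1)
    (h3 : x * y = y * x) (h4 : x * y' = y' * x) (h5 : x' * y = y * x') (h6 : x' * y' = y' * x')
    (h7 : (1 - x * x') * (1 - y * y') = 0) :
    ∃ φ : O p q →ₐ[ℂ] Module.End ℂ V,
      φ (a p q) = x ∧ φ (a' p q) = x' ∧ φ (b p q) = y ∧ φ (b' p q) = y' := by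
  let g : FA →ₐ[ℂ] Module.End ℂ V := FreeAlgebra.lift ℂ ![x, x', y, y']
  have ga : g Ag = x := by simp [g, Ag]
  have ga' : g Ag' = x' := by simp [g, Ag']
  have gb : g Bg = y := by simp [g, Bg]
  have gb' : g Bg' = y' := by simp [g, Bg']
  have hg : ∀ ⦃s t : FA⦄, Rel p q s t → g s = g t := by
    intro s t h
    cases h <;> simp only [map_mul, map_add, map_sub, map_smul, map_one, map_zero,
      Complex.ofReal_sub, Complex.ofReal_one, ga, ga', gb, gb', h1, h2, h3, h4, h5, h6, h7]
  refine ⟨RingQuot.liftAlgHom ℂ ⟨g, hg⟩, ?_, ?_, ?_, ?_⟩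
  · rw [a, RingQuot.liftAlgHom_mkAlgHom_apply, ga]
  · rw [a', RingQuot.liftAlgHom_mkAlgHom_apply, ga']
  · rw [b, RingQuot.liftAlgHom_mkAlgHom_apply, gb]
  · rw [b', RingQuot.liftAlgHom_mkAlgHom_apply, gb']

lemma map_ipow {R R' : Type*} [Ring R] [Ring R'] [Algebra ℂ R] [Algebra ℂ R'] (φ : R →ₐ[ℂ] R')
    (x x' : R) (μ : ℤ) : φ (ipow x x' μ) = ipow (φ x) (φ x') μ := by
  rw [ipow, ipow]; split_ifs <;> simp

lemma SU : opS * opU = opU * opS := rfl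
lemma SU' : opS * opU' = opU' * opS := rfl
lemma S'U : opS' r * opU = opU * opS' r := rfl
lemma S'U' : opS' r * opU' = opU' * opS' r := rfl

lemma map_basisElem (φ : O p q →ₐ[ℂ] Module.End ℂ V) (x x' y y' : Module.End ℂ V)
    (h : φ (a p q) = x ∧ φ (a' p q) = x' ∧ φ (b p q) = y ∧ φ (b' p q) = y') (μ ν m n) (v : V) :
    φ (basisElem p q (μ, ν, m, n)) v =
      ipow x x' μ (((1 - x * x') ^ m) (((1 - y * y') ^ n) (ipow y y' ν v))) := by
  obtain ⟨rfl, rfl, rfl, rfl⟩ := h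
  simp only [basisElem, apow_eq, bpow_eq, map_mul, map_ipow, map_pow, map_sub, map_one,
    Module.End.mul_apply]

lemma rep1 (hq : q ≠ 0) : ∃ ψ : O p q →ₗ[ℂ] V, ∃ P : ℤ → ℂ[X], (∀ μ, P μ ≠ 0) ∧
    ∀ μ ν m n, ψ (basisElem p q (μ, ν, m, n)) =
      if n = 0 then D μ ν (P μ * X ^ m) else 0 := by
  have hq' : (q : ℂ) ≠ 0 := by exact_mod_cast hq
  obtain ⟨φ, h⟩ := exists_lift p q opS (opS' q) opU opU' (SS' _ hq')
    (by rw [UU', UU, ← add_smul]; simp) SU SU' (S'U _) (S'U' _) (by rw [UU]; simp)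
  choose P hP hP' using Sipow_D (q : ℂ)
  refine ⟨(LinearMap.applyₗ (D 0 0 1)) ∘ₗ φ.toLinearMap, P, hP, fun μ ν m n => ?_⟩
  have : ((LinearMap.applyₗ (D 0 0 1)) ∘ₗ φ.toLinearMap) (basisElem p q (μ, ν, m, n)) =
    φ (basisElem p q (μ, ν, m, n)) (D 0 0 1) := rfl
  rw [this, map_basisElem p q φ _ _ _ _ h, Uipow_D, UU, sub_self]
  split_ifs with hn
  · rw [hn, pow_zero, Module.End.one_apply, Npow_D, hP']; simp
  · rw [zero_pow hn]; simp

lemma rep2 (hp : p ≠ 0) : ∃ ψ : O p q →ₗ[ℂ] V, ∃ P : ℤ → ℂ[X], (∀ μ, P μ ≠ 0) ∧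
    ∀ μ ν m n, ψ (basisElem p q (μ, ν, m, n)) =
      if m = 0 then D ν μ (P ν * (C (((p : ℂ) ^ ν) ^ n) * X ^ n)) else 0 := by
  have hp' : (p : ℂ) ≠ 0 := by exact_mod_cast hp
  obtain ⟨φ, h⟩ := exists_lift p q opU opU' opS (opS' p)
    (by rw [UU', UU, ← add_smul]; simp) (SS' _ hp') SU.symm (S'U _).symm SU'.symm (S'U' _).symm
    (by rw [UU]; simp)
  choose P hP hP' using Sipow_D (p : ℂ)
  refine ⟨(LinearMap.applyₗ (D 0 0 1)) ∘ₗ φ.toLinearMap, P, hP, fun μ ν m n => ?_⟩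
  have : ((LinearMap.applyₗ (D 0 0 1)) ∘ₗ φ.toLinearMap) (basisElem p q (μ, ν, m, n)) =
    φ (basisElem p q (μ, ν, m, n)) (D 0 0 1) := rfl
  rw [this, map_basisElem p q φ _ _ _ _ h, hP', Npow_D, UU, sub_self]
  split_ifs with hn
  · rw [hn, pow_zero, Module.End.one_apply, Uipow_D, zero_add]; congr 1; ring
  · rw [zero_pow hn]; simp

lemma coeff_zero_1 (hq : q ≠ 0)
    (l : {x : ℤ × ℤ × ℕ × ℕ // x.2.2.1 * x.2.2.2 = 0} →₀ ℂ)
    (hl : l.sum (fun t c => c • basisElem p q t.1) = 0) (t₀) (h₀ : t₀.1.2.2.2 = 0) : l t₀ = 0 := by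
  obtain ⟨ψ, P, hP, hψ⟩ := rep1 p q hq
  have h1 := congrFun (congrFun (congrArg ψ hl) t₀.1.1) t₀.1.2.1
  have h2 : P t₀.1.1 * l.sum (fun t c => if t.1.2.2.2 = 0 ∧ t₀.1.1 = t.1.1 ∧ t₀.1.2.1 = t.1.2.1
      then C c * X ^ t.1.2.2.1 else 0) = 0 := by
    rw [map_zero] at h1
    rw [Finsupp.sum, map_sum, Finset.sum_apply, Finset.sum_apply] at h1
    rw [Finsupp.sum, Finset.mul_sum]
    refine Eq.trans (Finset.sum_congr rfl fun t _ => ?_) h1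
    obtain ⟨⟨μ, ν, m, n⟩, ht⟩ := t
    rw [map_smul, hψ]
    by_cases hn : n = 0
    · by_cases hh : t₀.1.1 = μ ∧ t₀.1.2.1 = ν
      · simp only [hn, hh, D, and_self, if_true, Pi.smul_apply, smul_eq_C_mul]; ring
      · simp [hn, hh, D]
    · simp [hn]
  have h3 := congrArg (fun f => coeff f t₀.1.2.2.1) ((mul_eq_zero.1 h2).resolve_left (hP _))
  simp only [Finsupp.sum, finsetSum_coeff, coeff_zero] at h3
  rw [Finset.sum_eq_single t₀] at h3
  · simpa [h₀] using h3
  · rintro ⟨⟨μ, ν, m, n⟩, ht⟩ _ hne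
    obtain ⟨⟨μ₀, ν₀, m₀, n₀⟩, ht₀⟩ := t₀
    dsimp only at h₀ ⊢
    split_ifs with hh
    · rw [coeff_C_mul_X_pow, if_neg]
      rintro rfl
      apply hne
      obtain ⟨rfl, rfl, rfl⟩ := hh
      subst h₀
      rfl
    · simp
  · intro hn
    rw [Finsupp.notMem_support_iff.1 hn]; simp

lemma coeff_zero_2 (hp : p ≠ 0)
    (l : {x : ℤ × ℤ × ℕ × ℕ // x.2.2.1 * x.2.2.2 = 0} →₀ ℂ)
    (hl : l.sum (fun t c => c • basisElem p q t.1) = 0) (t₀) (h₀ : t₀.1.2.2.1 = 0) : l t₀ = 0 := by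
  obtain ⟨ψ, P, hP, hψ⟩ := rep2 p q hp
  have hp' : (p : ℂ) ≠ 0 := by exact_mod_cast hp
  have h1 := congrFun (congrFun (congrArg ψ hl) t₀.1.2.1) t₀.1.1
  have h2 : P t₀.1.2.1 * l.sum (fun t c => if t.1.2.2.1 = 0 ∧ t₀.1.2.1 = t.1.2.1 ∧ t₀.1.1 = t.1.1
      then C (c * ((p : ℂ) ^ t.1.2.1) ^ t.1.2.2.2) * X ^ t.1.2.2.2 else 0) = 0 := by
    rw [map_zero] at h1
    rw [Finsupp.sum, map_sum, Finset.sum_apply, Finset.sum_apply] at h1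
    rw [Finsupp.sum, Finset.mul_sum]
    refine Eq.trans (Finset.sum_congr rfl fun t _ => ?_) h1
    obtain ⟨⟨μ, ν, m, n⟩, ht⟩ := t
    rw [map_smul, hψ]
    by_cases hn : m = 0
    · by_cases hh : t₀.1.2.1 = ν ∧ t₀.1.1 = μ
      · simp only [hn, hh, D, and_self, if_true, Pi.smul_apply, smul_eq_C_mul, C_mul]; ring
      · simp [hn, hh, D]
    · simp [hn]
  have h3 := congrArg (fun f => coeff f t₀.1.2.2.2) ((mul_eq_zero.1 h2).resolve_left (hP _))
  simp only [Finsupp.sum, finsetSum_coeff, coeff_zero] at h3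
  rw [Finset.sum_eq_single t₀] at h3
  · rw [if_pos ⟨h₀, rfl, rfl⟩, coeff_C_mul_X_pow, if_pos rfl] at h3
    exact (mul_eq_zero.1 h3).resolve_right (pow_ne_zero _ (zpow_ne_zero _ hp'))
  · rintro ⟨⟨μ, ν, m, n⟩, ht⟩ _ hne
    obtain ⟨⟨μ₀, ν₀, m₀, n₀⟩, ht₀⟩ := t₀
    dsimp only at h₀ ⊢
    split_ifs with hh
    · rw [coeff_C_mul_X_pow, if_neg]
      rintro rfl
      apply hne
      obtain ⟨rfl, rfl, rfl⟩ := hh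
      subst h₀
      rfl
    · simp
  · intro hn
    rw [Finsupp.notMem_support_iff.1 hn]; simp

end rep

/-- the family `{a_μ (1−aa*)^m (1−bb*)^n b_ν : μ,ν ∈ ℤ, m,n ∈ ℕ, mn = 0}`
is a vector space basis of `O(S³_pq)` over ℂ: it is linearly independent and spans. -/
theorem stmt9 (hp0 : 0 < p) (hp1 : p < 1) (hq0 : 0 < q) (hq1 : q < 1) :
    LinearIndependent ℂ
      (fun t : {x : ℤ × ℤ × ℕ × ℕ // x.2.2.1 * x.2.2.2 = 0} => basisElem p q t.1) ∧
    Submodule.span ℂ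
      (Set.range (fun t : {x : ℤ × ℤ × ℕ × ℕ // x.2.2.1 * x.2.2.2 = 0} => basisElem p q t.1))
      = ⊤ := by
  refine ⟨?_, span_top p q hp0.ne' hq0.ne'⟩
  rw [linearIndependent_iff]
  intro l hl
  rw [Finsupp.linearCombination_apply] at hl
  ext t
  rcases mul_eq_zero.1 t.2 with h | h
  · exact coeff_zero_2 p q hp0.ne' l hl t h
  · exact coeff_zero_1 p q hq0.ne' l hl t h

end S3pq
end
end

section
/- Let A be a unital C*-algebra, let 0 < q < 1, and let a ∈ A satisfy a*a − q·aa* = (1−q)·1. Then a*a ≥ (1−q)·1 in the order of self-adjoint elements; in particular a*a is invertible, |a| := (a*a)^{1/2} is invertible, and s := a·|a|^{−1} is an isometry, i.e. s*s = 1. -/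
/-- in a unital C*-algebra, if `a*a − q·aa* = (1−q)·1` with `0 < q < 1`, then
`a*a ≥ (1−q)·1`, `a*a` and `|a| = (a*a)^{1/2}` are invertible, and `a·|a|⁻¹` is an isometry. -/
theorem stmt10 {A : Type*} [CStarAlgebra A] [PartialOrder A] [StarOrderedRing A]
    (q : ℝ) (hq0 : 0 < q) (hq1 : q < 1) (a : A)
    (hrel : star a * a - (q : ℂ) • (a * star a) = ((1 - q : ℝ) : ℂ) • (1 : A)) :
    ((1 - q : ℝ) : ℂ) • (1 : A) ≤ star a * a ∧
    IsUnit (star a * a) ∧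
    IsUnit (CFC.sqrt (star a * a)) ∧
    star (a * Ring.inverse (CFC.sqrt (star a * a))) * (a * Ring.inverse (CFC.sqrt (star a * a)))
      = 1 := by
  have hpos : 0 ≤ star a * a := star_mul_self_nonneg a
  have h1 : ((1 - q : ℝ) : ℂ) • (1 : A) ≤ star a * a := by
    rw [← hrel, sub_le_self_iff, Complex.coe_smul]
    exact smul_nonneg hq0.le (mul_star_self_nonneg a)
  have h2 : IsUnit (star a * a) := by
    refine CStarAlgebra.isUnit_of_le (((1 - q : ℝ) : ℂ) • (1 : A)) h1 ?_
    rw [Complex.coe_smul]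
    exact IsStrictlyPositive.smul (by linarith) ⟨zero_le_one, isUnit_one⟩
  have h3 : IsUnit (CFC.sqrt (star a * a)) := (CFC.isUnit_sqrt_iff _ hpos).2 h2
  refine ⟨h1, h2, h3, ?_⟩
  have hs : star (CFC.sqrt (star a * a)) = CFC.sqrt (star a * a) :=
    (IsSelfAdjoint.of_nonneg (CFC.sqrt_nonneg _)).star_eq
  have hm := CFC.sqrt_mul_sqrt_self (star a * a) hpos
  generalize CFC.sqrt (star a * a) = b at *
  rw [star_mul, ← Ring.inverse_star, hs, mul_assoc, ← mul_assoc (star a), ← hm, mul_assoc b,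
    Ring.mul_inverse_cancel _ h3, mul_one, Ring.inverse_mul_cancel _ h3]
end

section
/- Let R be a unital ℂ-algebra and let a, a', b, b' ∈ R satisfy: a'a − q·aa' = (1−q)·1, b'b − p·bb' = (1−p)·1, each of a, a' commutes with each of b, b', and (1−aa')(1−bb') = 0, where 0 < p,q < 1. Then for every integer n ≥ 1: Σ_{k=0}^{n} [n choose k]_q · q^{n−k} · (1−aa')^{n−k} (a')^{k} b^{n−k} a^{k} (b')^{n−k} = 1, and symmetrically Σ_{k=0}^{n} [n choose k]_p · p^{n−k} · (1−bb')^{n−k} (b')^{k} a^{n−k} b^{k} (a')^{n−k} = 1. (In particular, for n = 1: a'a + q·bb' − q·aa'bb' = 1 and b'b + p·aa' − p·aa'bb' = 1.) -/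
/-- The Gaussian (q-)binomial coefficient
`[n choose k]_q = ((q−1)⋯(qⁿ−1)) / (((q−1)⋯(q^k−1))·((q−1)⋯(q^{n−k}−1)))`. -/
noncomputable def gbinom (q : ℝ) (n k : ℕ) : ℝ :=
  (∏ i ∈ Finset.range n, (q ^ (i + 1) - 1)) /
    ((∏ i ∈ Finset.range k, (q ^ (i + 1) - 1)) * (∏ i ∈ Finset.range (n - k), (q ^ (i + 1) - 1)))

/-- Generic q-binomial partition of unity in a commutative ring. -/
theorem aux_comm {S : Type*} [CommRing S] (g : ℕ → ℕ → S) (q x : S)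
    (h0 : ∀ n, g n 0 = 1) (h1 : ∀ n, g n n = 1)
    (hP : ∀ n k, k + 1 ≤ n → g (n + 1) (k + 1) = g n k + q ^ (k + 1) * g n (k + 1)) (n : ℕ) :
    ∑ k ∈ Finset.range (n + 1), g n k * q ^ (n - k) *
      (x ^ (n - k) * ∏ i ∈ Finset.range k, (1 - q ^ (i + 1) * x)) = 1 := by
  induction n with
  | zero => simp [h0]
  | succ n ih =>
    refine Eq.trans ?_ ih
    rw [Finset.sum_range_succ', Finset.sum_range_succ]
    have key : ∀ k ∈ Finset.range n, g (n + 1) (k + 1) * q ^ (n + 1 - (k + 1)) *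
        (x ^ (n + 1 - (k + 1)) * ∏ i ∈ Finset.range (k + 1), (1 - q ^ (i + 1) * x)) =
        g n k * q ^ (n - k) * (x ^ (n - k) * ∏ i ∈ Finset.range (k + 1), (1 - q ^ (i + 1) * x)) +
        q ^ (k + 1) * g n (k + 1) * q ^ (n - k) *
          (x ^ (n - k) * ∏ i ∈ Finset.range (k + 1), (1 - q ^ (i + 1) * x)) := by
      intro k hk
      rw [hP n k (by simpa using hk), Nat.add_sub_add_right]
      ring
    have h2 : ∀ k ∈ Finset.range (n + 1), g n k * q ^ (n - k) *
        (x ^ (n - k) * ∏ i ∈ Finset.range k, (1 - q ^ (i + 1) * x)) =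
        g n k * q ^ (n - k) * (x ^ (n - k) * ∏ i ∈ Finset.range (k + 1), (1 - q ^ (i + 1) * x)) +
        q ^ k * g n k * q ^ (n + 1 - k) *
          (x ^ (n + 1 - k) * ∏ i ∈ Finset.range k, (1 - q ^ (i + 1) * x)) := by
      intro k hk
      have : n + 1 - k = (n - k) + 1 := by
        have := Finset.mem_range.1 hk
        omega
      rw [this, Finset.prod_range_succ]
      ring
    rw [Finset.sum_congr rfl key, Finset.sum_congr rfl h2, Finset.sum_add_distrib,
      Finset.sum_add_distrib, Finset.sum_range_succ,
      Finset.sum_range_succ' (fun k => q ^ k * g n k * q ^ (n + 1 - k) *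
          (x ^ (n + 1 - k) * ∏ i ∈ Finset.range k, (1 - q ^ (i + 1) * x)))]
    simp only [Nat.add_sub_add_right, h0, h1]
    simp
    ring

theorem aux_ne (q : ℝ) (h0 : 0 < q) (h1 : q < 1) (n : ℕ) :
    (∏ i ∈ Finset.range n, (q ^ (i + 1) - 1)) ≠ 0 := by
  refine Finset.prod_ne_zero_iff.2 fun i _ => ?_
  have := pow_lt_one₀ h0.le h1 (Nat.succ_ne_zero i)
  exact (sub_neg.2 this).ne

theorem gbinom_pascal (q : ℝ) (h0 : 0 < q) (h1 : q < 1) (n k : ℕ) (hk : k + 1 ≤ n) :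
    gbinom q (n + 1) (k + 1) = gbinom q n k + q ^ (k + 1) * gbinom q n (k + 1) := by
  obtain ⟨m, rfl⟩ := Nat.exists_eq_add_of_le hk
  have e1 : k + 1 + m + 1 - (k + 1) = m + 1 := by omega
  have e2 : k + 1 + m - k = m + 1 := by omega
  have e3 : k + 1 + m - (k + 1) = m := by omega
  unfold gbinom
  rw [e1, e2, e3]
  have n1 := aux_ne q h0 h1 k
  have n2 := aux_ne q h0 h1 m
  have n3 : q ^ (k + 1) - 1 ≠ 0 := by
    have := aux_ne q h0 h1 (k + 1)
    rw [Finset.prod_range_succ] at this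
    exact right_ne_zero_of_mul this
  have n4 : q ^ (m + 1) - 1 ≠ 0 := by
    have := aux_ne q h0 h1 (m + 1)
    rw [Finset.prod_range_succ] at this
    exact right_ne_zero_of_mul this
  rw [Finset.prod_range_succ _ (k + 1 + m), Finset.prod_range_succ _ k,
    Finset.prod_range_succ _ m]
  generalize (∏ i ∈ Finset.range (k + 1 + m), (q ^ (i + 1) - 1)) = F
  generalize (∏ i ∈ Finset.range k, (q ^ (i + 1) - 1)) = A at *
  generalize (∏ i ∈ Finset.range m, (q ^ (i + 1) - 1)) = B at *
  have e : q ^ (k + 1 + m + 1) = q ^ (k + 1) * q ^ (m + 1) := by ring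
  rw [e]
  generalize q ^ (k + 1) = u at *
  generalize q ^ (m + 1) = v at *
  field_simp
  ring

open Polynomial in
theorem aux_half {R : Type*} [Ring R] [Algebra ℂ R] (q : ℝ)
    (hq0 : 0 < q) (hq1 : q < 1)
    (a a' b b' : R)
    (ha : a' * a - (q : ℂ) • (a * a') = ((1 - q : ℝ) : ℂ) • (1 : R))
    (hab : a * b = b * a) (hab' : a * b' = b' * a)
    (ha'b : a' * b = b * a') (ha'b' : a' * b' = b' * a')
    (hkey : (1 - a * a') * (1 - b * b') = 0) (n : ℕ) :
      ∑ k ∈ Finset.range (n + 1), ((gbinom q n k * q ^ (n - k) : ℝ) : ℂ) •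
        ((1 - a * a') ^ (n - k) * a' ^ k * b ^ (n - k) * a ^ k * b' ^ (n - k)) = 1 := by
  obtain ⟨x, hx⟩ : ∃ x, x = 1 - a * a' := ⟨_, rfl⟩
  have hax : a' * a = 1 - (q : ℂ) • x := by
    rw [sub_eq_iff_eq_add] at ha
    rw [ha, hx]
    push_cast
    module
  have hxa : x * a = (q : ℂ) • (a * x) := by
    calc x * a = a - a * (a' * a) := by rw [hx]; noncomm_ring
      _ = _ := by rw [hax, mul_sub, mul_one, mul_smul_comm, sub_sub_cancel]
  have hxak : ∀ k : ℕ, x * a ^ k = (q : ℂ) ^ k • (a ^ k * x) := by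
    intro k
    induction k with
    | zero => simp
    | succ k ih =>
      rw [pow_succ, ← mul_assoc, ih, smul_mul_assoc, mul_assoc, hxa, mul_smul_comm, smul_smul,
        mul_assoc, ← pow_succ]
  have hW : ∀ k : ℕ, a' ^ k * a ^ k =
      aeval x (∏ i ∈ Finset.range k, (1 - (C (q : ℂ)) ^ (i + 1) * X)) := by
    intro k
    induction k with
    | zero => simp
    | succ k ih =>
      rw [Finset.prod_range_succ, map_mul, ← ih]
      calc a' ^ (k + 1) * a ^ (k + 1) = a' ^ k * ((a' * a) * a ^ k) := by
            rw [pow_succ, pow_succ']; simp only [mul_assoc]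
        _ = a' ^ k * (a ^ k - (q : ℂ) • (x * a ^ k)) := by
            rw [hax, sub_mul, one_mul, smul_mul_assoc]
        _ = _ := by
            rw [hxak, smul_smul, ← pow_succ']
            simp [← map_pow, mul_sub, mul_assoc, Algebra.smul_def]
            rw [← mul_assoc _ (algebraMap ℂ R _), ← mul_assoc (a ^ k),
              ← Algebra.commutes _ (a ^ k)]
            simp only [mul_assoc]
  have hxb : Commute x b := by
    rw [hx]
    exact (Commute.one_left b).sub_left (Commute.mul_left hab ha'b)
  have hxbb : x * (b * b') = x := by
    rw [← hx, mul_sub, mul_one, sub_eq_zero] at hkey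
    exact hkey.symm
  have hxbm : ∀ m : ℕ, x * (b ^ m * b' ^ m) = x := by
    intro m
    induction m with
    | zero => simp
    | succ m ih =>
      calc x * (b ^ (m + 1) * b' ^ (m + 1)) = (x * b ^ m) * (b * b') * b' ^ m := by
            rw [pow_succ, pow_succ']; simp only [mul_assoc]
        _ = b ^ m * (x * (b * b')) * b' ^ m := by
            rw [(hxb.pow_right m).eq]; simp only [mul_assoc]
        _ = x := by rw [hxbb, ← (hxb.pow_right m).eq, mul_assoc, ih]
  have hxm : ∀ m : ℕ, x ^ m * (b ^ m * b' ^ m) = x ^ m := by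
    intro m
    cases m with
    | zero => simp
    | succ m => rw [pow_succ, mul_assoc, hxbm]
  have hterm : ∀ m k : ℕ, x ^ m * a' ^ k * b ^ m * a ^ k * b' ^ m =
      aeval x (X ^ m * ∏ i ∈ Finset.range k, (1 - (C (q : ℂ)) ^ (i + 1) * X)) := by
    intro m k
    have c1 : Commute (b ^ m) (a ^ k) := (Commute.pow_pow hab k m).symm
    have c2 : Commute (a' ^ k * a ^ k) (x ^ m) := by
      rw [hW]
      have : x ^ m = aeval x ((X : ℂ[X]) ^ m) := by simp
      rw [this]
      show _ * _ = _ * _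
      rw [← map_mul, ← map_mul, mul_comm]
    have c3 : Commute (a' ^ k * a ^ k) (b ^ m * b' ^ m) :=
      Commute.mul_left
        (Commute.mul_right (Commute.pow_pow ha'b k m) (Commute.pow_pow ha'b' k m))
        (Commute.mul_right (Commute.pow_pow hab k m) (Commute.pow_pow hab' k m))
    calc x ^ m * a' ^ k * b ^ m * a ^ k * b' ^ m
        = x ^ m * a' ^ k * (b ^ m * a ^ k) * b' ^ m := by simp only [mul_assoc]
      _ = x ^ m * ((a' ^ k * a ^ k) * (b ^ m * b' ^ m)) := by
          rw [c1.eq]; simp only [mul_assoc]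
      _ = x ^ m * (a' ^ k * a ^ k) := by
          rw [c3.eq, ← mul_assoc, hxm]
      _ = _ := by rw [hW, map_mul, map_pow, aeval_X]
  rw [← hx]
  have main := aux_comm (fun n k => (C ((gbinom q n k : ℝ) : ℂ) : ℂ[X])) (C (q : ℂ)) X
    (fun n => by simp [gbinom, div_self (aux_ne q hq0 hq1 n)])
    (fun n => by simp [gbinom, div_self (aux_ne q hq0 hq1 n)])
    (fun n k h => by simp [gbinom_pascal q hq0 hq1 n k h]) n
  have := congrArg (aeval x) main
  rw [map_sum, map_one] at this
  rw [← this]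
  refine Finset.sum_congr rfl fun k _ => ?_
  rw [hterm, map_mul (aeval x) (_ * _), ← map_pow C, ← map_mul C, aeval_C, Algebra.smul_def]
  push_cast
  rfl

/-- the strong-connection partition-of-unity identities in any unital ℂ-algebra
with elements `a, a', b, b'` satisfying the `S³_pq` relations. -/
theorem stmt11 {R : Type*} [Ring R] [Algebra ℂ R] (p q : ℝ)
    (hp0 : 0 < p) (hp1 : p < 1) (hq0 : 0 < q) (hq1 : q < 1)
    (a a' b b' : R)
    (ha : a' * a - (q : ℂ) • (a * a') = ((1 - q : ℝ) : ℂ) • (1 : R))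
    (hb : b' * b - (p : ℂ) • (b * b') = ((1 - p : ℝ) : ℂ) • (1 : R))
    (hab : a * b = b * a) (hab' : a * b' = b' * a)
    (ha'b : a' * b = b * a') (ha'b' : a' * b' = b' * a')
    (hkey : (1 - a * a') * (1 - b * b') = 0) :
    (∀ n : ℕ, 1 ≤ n →
      ∑ k ∈ Finset.range (n + 1), ((gbinom q n k * q ^ (n - k) : ℝ) : ℂ) •
        ((1 - a * a') ^ (n - k) * a' ^ k * b ^ (n - k) * a ^ k * b' ^ (n - k)) = 1) ∧
    (∀ n : ℕ, 1 ≤ n →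
      ∑ k ∈ Finset.range (n + 1), ((gbinom p n k * p ^ (n - k) : ℝ) : ℂ) •
        ((1 - b * b') ^ (n - k) * b' ^ k * a ^ (n - k) * b ^ k * a' ^ (n - k)) = 1) ∧
    a' * a + (q : ℂ) • (b * b') - (q : ℂ) • (a * a' * (b * b')) = 1 ∧
    b' * b + (p : ℂ) • (a * a') - (p : ℂ) • (a * a' * (b * b')) = 1 := by
  have hkey' : (1 - b * b') * (1 - a * a') = 0 := by
    rw [← hkey]
    have c : Commute (a * a') (b * b') :=
      Commute.mul_left (Commute.mul_right hab hab') (Commute.mul_right ha'b ha'b')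
    have := c.eq
    simp only [sub_mul, mul_sub, one_mul, mul_one, this]
    abel
  have hk2 : a * a' * (b * b') = a * a' + b * b' - 1 := by
    rw [← sub_eq_zero, ← hkey]
    simp only [sub_mul, mul_sub, one_mul, mul_one]
    abel
  refine ⟨fun n _ => aux_half q hq0 hq1 a a' b b' ha hab hab' ha'b ha'b' hkey n,
    fun n _ => aux_half p hp0 hp1 b b' a a' hb hab.symm ha'b.symm hab'.symm ha'b'.symm hkey' n,
    ?_, ?_⟩
  · rw [sub_eq_iff_eq_add] at ha
    rw [ha, hk2]
    push_cast
    module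
  · rw [sub_eq_iff_eq_add] at hb
    rw [hb, hk2]
    push_cast
    module
end

section
/- Let R be a unital ℂ-algebra and let a, a', b, b' ∈ R satisfy: a'a − q·aa' = (1−q)·1, b'b − p·bb' = (1−p)·1, each of a, a' commutes with each of b, b', and (1−aa')(1−bb') = 0, where 0 < p,q < 1. For an integer n ≥ 1 define R_j := a^{j}(b')^{n−j} for j = 0,…,n and L_k := [n choose k]_q · q^{n−k} · (1−aa')^{n−k} (a')^{k} b^{n−k} for k = 0,…,n. Then the (n+1)×(n+1) matrix E over R with entries E_{jk} = R_j · L_k is idempotent: E² = E. In particular, the 2×2 matrix [[aa', q·a(1−aa')b], [a'b', q·(1−aa')b'b]] is idempotent. -/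
/-- Gaussian binomials by the Pascal recursion. -/
noncomputable def gbR (q : ℝ) : ℕ → ℕ → ℝ
  | _, 0 => 1
  | 0, _ + 1 => 0
  | n + 1, k + 1 => gbR q n k + q ^ (k + 1) * gbR q n (k + 1)

lemma gbR_zero (q : ℝ) (n : ℕ) : gbR q n 0 = 1 := by cases n <;> rfl

lemma gbR_succ (q : ℝ) (n k : ℕ) :
    gbR q (n + 1) (k + 1) = gbR q n k + q ^ (k + 1) * gbR q n (k + 1) := rfl

lemma gbR_of_lt (q : ℝ) : ∀ n k : ℕ, n < k → gbR q n k = 0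
  | _, 0, h => by omega
  | 0, _ + 1, _ => rfl
  | n + 1, k + 1, h => by
    rw [gbR_succ, gbR_of_lt q n k (by omega), gbR_of_lt q n (k + 1) (by omega)]; simp

lemma gbR_self (q : ℝ) : ∀ n : ℕ, gbR q n n = 1
  | 0 => rfl
  | n + 1 => by rw [gbR_succ, gbR_self q n, gbR_of_lt q n (n + 1) (by omega)]; simp

lemma gbR_mul (q : ℝ) : ∀ m k : ℕ, gbR q (m + k) k *
    ((∏ i ∈ Finset.range k, (q ^ (i + 1) - 1)) * (∏ i ∈ Finset.range m, (q ^ (i + 1) - 1))) =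
    ∏ i ∈ Finset.range (m + k), (q ^ (i + 1) - 1)
  | m, 0 => by simp [gbR_zero]
  | 0, k + 1 => by simp [gbR_self]
  | m + 1, k + 1 => by
    have h1 := gbR_mul q (m + 1) k
    have h2 := gbR_mul q m (k + 1)
    have e : m + 1 + k = m + (k + 1) := by omega
    rw [show m + 1 + (k + 1) = m + (k + 1) + 1 by omega, gbR_succ,
      Finset.prod_range_succ _ (m + (k + 1))]
    rw [e] at h1
    rw [Finset.prod_range_succ _ k] at h2 ⊢
    rw [Finset.prod_range_succ _ m] at h1 ⊢
    linear_combination (q ^ (k + 1) - 1) * h1 + q ^ (k + 1) * (q ^ (m + 1) - 1) * h2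

lemma gbinom_eq (q : ℝ) (hq0 : 0 < q) (hq1 : q < 1) (n k : ℕ) (h : k ≤ n) :
    gbinom q n k = gbR q n k := by
  have hne : ∀ m, (∏ i ∈ Finset.range m, (q ^ (i + 1) - 1)) ≠ 0 := by
    intro m
    rw [Finset.prod_ne_zero_iff]
    intro i _
    have := pow_lt_one₀ hq0.le hq1 (Nat.succ_ne_zero i)
    exact (sub_neg.2 this).ne
  have := gbR_mul q (n - k) k
  rw [Nat.sub_add_cancel h] at this
  unfold gbinom
  rw [← this]
  exact mul_div_cancel_right₀ _ (mul_ne_zero (hne _) (hne _))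

lemma gbR_sum {A : Type*} [CommRing A] (f : ℝ →+* A) (q : ℝ) (x : A) (n : ℕ) :
    ∑ k ∈ Finset.range (n + 1), f (gbR q n k) * (f q * x) ^ (n - k) *
      ∏ i ∈ Finset.range k, (1 - f q ^ (i + 1) * x) = 1 := by
  induction n with
  | zero => simp [gbR_zero]
  | succ n ih =>
    have key : ∑ k ∈ Finset.range (n + 1), f (q ^ (k + 1) * gbR q n (k + 1)) *
        (f q * x) ^ (n - k) * ∏ i ∈ Finset.range (k + 1), (1 - f q ^ (i + 1) * x)
        + (f q * x) ^ (n + 1)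
        = ∑ k ∈ Finset.range (n + 1), f (q ^ k * gbR q n k) *
        (f q * x) ^ (n + 1 - k) * ∏ i ∈ Finset.range k, (1 - f q ^ (i + 1) * x) := by
      have h := Finset.sum_range_succ' (fun k => f (q ^ k * gbR q n k) *
        (f q * x) ^ (n + 1 - k) * ∏ i ∈ Finset.range k, (1 - f q ^ (i + 1) * x)) (n + 1)
      rw [Finset.sum_range_succ, gbR_of_lt q n (n + 1) (by omega)] at h
      simp only [gbR_zero, Nat.add_sub_add_right] at h
      simpa using h.symm
    rw [Finset.sum_range_succ']
    simp only [gbR_succ, gbR_zero, Nat.add_sub_add_right, map_add, add_mul,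
      Finset.sum_add_distrib]
    simp only [map_one, one_mul, Finset.range_zero, Finset.prod_empty, mul_one, Nat.sub_zero]
    rw [add_assoc, key, ← Finset.sum_add_distrib]
    refine Eq.trans ?_ ih
    refine Finset.sum_congr rfl fun k hk => ?_
    have hk' : n + 1 - k = (n - k) + 1 := by have := Finset.mem_range.1 hk; omega
    rw [hk', Finset.prod_range_succ, map_mul, map_pow]
    ring

/-- Basic consequences of the relations. -/
lemma prod_powers {R : Type*} [Ring R] [Algebra ℂ R] (q : ℂ) (a a' : R)
    (h1 : a' * a = 1 - q • (1 - a * a')) (h2 : (1 - a * a') * a = q • (a * (1 - a * a')))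
    (k : ℕ) : a' ^ k * a ^ k = Polynomial.aeval (1 - a * a')
      (∏ i ∈ Finset.range k, (1 - (Polynomial.C q) ^ (i + 1) * Polynomial.X)) := by
  have hx : ∀ k : ℕ, (1 - a * a') * a ^ k = q ^ k • (a ^ k * (1 - a * a')) := by
    intro k
    induction k with
    | zero => simp
    | succ k ih =>
      rw [pow_succ, ← mul_assoc, ih, smul_mul_assoc, mul_assoc (a ^ k), h2, mul_smul_comm,
        smul_smul, ← mul_assoc, pow_succ]
  induction k with
  | zero => simp
  | succ k ih =>
    have e : a' ^ (k + 1) * a ^ (k + 1) = a' ^ k * ((a' * a) * a ^ k) := by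
      rw [pow_succ, pow_succ']; simp only [mul_assoc]
    rw [e, h1, sub_mul, smul_mul_assoc, hx, smul_smul, mul_sub, one_mul, mul_smul_comm,
      ← mul_assoc (a' ^ k), ih, Finset.prod_range_succ, map_mul, ← pow_succ']
    rw [map_sub, map_mul, map_pow, map_one, Polynomial.aeval_C, Polynomial.aeval_X, mul_sub,
      mul_one, ← map_pow, ← Algebra.smul_def]
    simp only [mul_sub, mul_one, mul_smul_comm]

lemma sum_LR {R : Type*} [Ring R] [Algebra ℂ R] (q : ℝ)
    (hq0 : 0 < q) (hq1 : q < 1) (a a' b b' : R)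
    (h1 : a' * a = 1 - (q : ℂ) • (1 - a * a'))
    (hab : a * b = b * a) (ha'b : a' * b = b * a')
    (hkey : (1 - a * a') * (b * b') = 1 - a * a') (n : ℕ) :
    ∑ k : Fin (n + 1), (((gbinom q n k * q ^ (n - (k : ℕ)) : ℝ) : ℂ) •
      ((1 - a * a') ^ (n - (k : ℕ)) * a' ^ (k : ℕ) * b ^ (n - (k : ℕ)))) *
      (a ^ (k : ℕ) * b' ^ (n - (k : ℕ))) = 1 := by
  have h2 : (1 - a * a') * a = (q : ℂ) • (a * (1 - a * a')) := by
    rw [sub_mul, mul_assoc, h1, mul_sub, mul_one, one_mul, mul_smul_comm]; abel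
  have cxb : Commute (1 - a * a') b :=
    (Commute.one_left b).sub_left (Commute.mul_left hab ha'b)
  have cab : Commute a b := hab
  have ca'b : Commute a' b := ha'b
  have hx : ∀ m : ℕ, (1 - a * a') ^ m * (b ^ m * b' ^ m) = (1 - a * a') ^ m := by
    have hx1 : ∀ m : ℕ, (1 - a * a') * (b ^ m * b' ^ m) = (1 - a * a') := by
      intro m
      induction m with
      | zero => simp
      | succ m ih =>
        calc (1 - a * a') * (b ^ (m + 1) * b' ^ (m + 1))
            = ((1 - a * a') * b ^ m) * (b * b') * b' ^ m := by
              rw [pow_succ, pow_succ']; simp only [mul_assoc]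
          _ = b ^ m * ((1 - a * a') * (b * b')) * b' ^ m := by
              rw [(cxb.pow_right m).eq]; simp only [mul_assoc]
          _ = 1 - a * a' := by
              rw [hkey, ← (cxb.pow_right m).eq, mul_assoc, ih]
    intro m
    cases m with
    | zero => simp
    | succ m => rw [pow_succ, mul_assoc, hx1]
  have hs := gbR_sum ((Polynomial.C : ℂ →+* Polynomial ℂ).comp Complex.ofRealHom) q
    Polynomial.X n
  have hs' := congrArg (Polynomial.aeval (R := ℂ) (1 - a * a')) hs
  rw [map_one, map_sum, ← Fin.sum_univ_eq_sum_range (fun k => Polynomial.aeval (R := ℂ) (1 - a * a') (_ * _ * _))] at hs'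
  refine Eq.trans ?_ hs'
  refine Finset.sum_congr rfl fun k _ => ?_
  have hk : (k : ℕ) ≤ n := by omega
  rw [gbinom_eq q hq0 hq1 n k hk]
  generalize hm : n - (k : ℕ) = m
  generalize (k : ℕ) = k at *
  have hp := prod_powers (q : ℂ) a a' h1 h2 k
  simp only [RingHom.comp_apply, Complex.ofRealHom_eq_coe]
  rw [map_mul, ← hp, mul_pow, ← map_pow, ← mul_assoc (Polynomial.C _), ← map_mul Polynomial.C, map_mul, Polynomial.aeval_C,
    map_pow, Polynomial.aeval_X, ← Algebra.smul_def, smul_mul_assoc, smul_mul_assoc]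
  push_cast
  congr 1
  have cp : Commute (a' ^ k * a ^ k) (b ^ m) :=
    Commute.mul_left (ca'b.pow_pow k m) (cab.pow_pow k m)
  have cP : Commute ((1 - a * a') ^ m) (a' ^ k * a ^ k) := by
    rw [hp, ← Polynomial.aeval_X (R := ℂ) (1 - a * a'), ← map_pow]
    simp only [Polynomial.aeval_X]
    exact (Commute.all _ _).map (Polynomial.aeval (R := ℂ) (1 - a * a'))
  calc (1 - a * a') ^ m * a' ^ k * b ^ m * (a ^ k * b' ^ m)
      = (1 - a * a') ^ m * a' ^ k * (b ^ m * a ^ k) * b' ^ m := by simp only [mul_assoc]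
    _ = ((1 - a * a') ^ m * (a' ^ k * a ^ k)) * (b ^ m * b' ^ m) := by
      rw [← (cab.pow_pow k m).eq]; simp only [mul_assoc]
    _ = (1 - a * a') ^ m * (a' ^ k * a ^ k) := by
      rw [cP.eq, mul_assoc, hx]

/-- the matrices `E_{jk} = R_j·L_k` built from the strong connection are
idempotent; in particular the displayed `2×2` matrix is idempotent. -/
theorem stmt12 {R : Type*} [Ring R] [Algebra ℂ R] (p q : ℝ)
    (hp0 : 0 < p) (hp1 : p < 1) (hq0 : 0 < q) (hq1 : q < 1)
    (a a' b b' : R)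
    (ha : a' * a - (q : ℂ) • (a * a') = ((1 - q : ℝ) : ℂ) • (1 : R))
    (hb : b' * b - (p : ℂ) • (b * b') = ((1 - p : ℝ) : ℂ) • (1 : R))
    (hab : a * b = b * a) (hab' : a * b' = b' * a)
    (ha'b : a' * b = b * a') (ha'b' : a' * b' = b' * a')
    (hkey : (1 - a * a') * (1 - b * b') = 0) :
    (∀ n : ℕ, 1 ≤ n →
      (Matrix.of (fun j k : Fin (n + 1) =>
          (a ^ (j : ℕ) * b' ^ (n - (j : ℕ))) *
            (((gbinom q n k * q ^ (n - (k : ℕ)) : ℝ) : ℂ) •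
              ((1 - a * a') ^ (n - (k : ℕ)) * a' ^ (k : ℕ) * b ^ (n - (k : ℕ)))))) *
        (Matrix.of (fun j k : Fin (n + 1) =>
          (a ^ (j : ℕ) * b' ^ (n - (j : ℕ))) *
            (((gbinom q n k * q ^ (n - (k : ℕ)) : ℝ) : ℂ) •
              ((1 - a * a') ^ (n - (k : ℕ)) * a' ^ (k : ℕ) * b ^ (n - (k : ℕ)))))) =
      (Matrix.of (fun j k : Fin (n + 1) =>
          (a ^ (j : ℕ) * b' ^ (n - (j : ℕ))) *
            (((gbinom q n k * q ^ (n - (k : ℕ)) : ℝ) : ℂ) •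
              ((1 - a * a') ^ (n - (k : ℕ)) * a' ^ (k : ℕ) * b ^ (n - (k : ℕ))))))) ∧
    (!![a * a', (q : ℂ) • (a * (1 - a * a') * b); a' * b', (q : ℂ) • ((1 - a * a') * b' * b)] *
      !![a * a', (q : ℂ) • (a * (1 - a * a') * b); a' * b', (q : ℂ) • ((1 - a * a') * b' * b)] =
      !![a * a', (q : ℂ) • (a * (1 - a * a') * b); a' * b', (q : ℂ) • ((1 - a * a') * b' * b)]) := by
  have h1 : a' * a = 1 - (q : ℂ) • (1 - a * a') := by
    rw [sub_eq_iff_eq_add.1 ha]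
    push_cast
    module
  have hk : (1 - a * a') * (b * b') = 1 - a * a' := by
    rw [mul_sub, mul_one] at hkey
    exact (sub_eq_zero.1 hkey).symm
  refine ⟨fun n _ => ?_, ?_⟩
  · have hs := sum_LR q hq0 hq1 a a' b b' h1 hab ha'b hk n
    ext i j
    simp only [Matrix.mul_apply, Matrix.of_apply]
    generalize (fun k : Fin (n + 1) => (((gbinom q n k * q ^ (n - (k : ℕ)) : ℝ) : ℂ) •
      ((1 - a * a') ^ (n - (k : ℕ)) * a' ^ (k : ℕ) * b ^ (n - (k : ℕ))))) = L at *
    have := congrArg (fun t => (a ^ (i : ℕ) * b' ^ (n - (i : ℕ))) * t *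
      (((gbinom q n j * q ^ (n - (j : ℕ)) : ℝ) : ℂ) •
      ((1 - a * a') ^ (n - (j : ℕ)) * a' ^ (j : ℕ) * b ^ (n - (j : ℕ))))) hs
    simp only [mul_one, Finset.mul_sum, Finset.sum_mul] at this
    rw [← this]
    refine Finset.sum_congr rfl fun k _ => ?_
    simp only [mul_assoc]
  · have cx : (1 - a * a') * b' = b' * (1 - a * a') :=
      ((Commute.one_left b').sub_left (Commute.mul_left hab' ha'b')).eq
    have hs : a' * a + ((q : ℂ) • ((1 - a * a') * b)) * b' = 1 := by
      rw [smul_mul_assoc, mul_assoc, hk, h1]; abel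
    have e : !![a * a', (q : ℂ) • (a * (1 - a * a') * b);
        a' * b', (q : ℂ) • ((1 - a * a') * b' * b)]
        = !![a * a', a * ((q : ℂ) • ((1 - a * a') * b));
          b' * a', b' * ((q : ℂ) • ((1 - a * a') * b))] := by
      rw [ha'b', cx]; simp only [mul_smul_comm, mul_assoc]
    rw [e]
    generalize (q : ℂ) • ((1 - a * a') * b) = y at hs
    have g : ∀ u v : R, u * a' * (a * v) + u * y * (b' * v) = u * v := by
      intro u v
      have := congrArg (fun t => u * t * v) hs
      simpa only [mul_add, add_mul, mul_one, mul_assoc] using this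
    rw [Matrix.mul_fin_two]
    simp only [g]
end

section
/- Let 0 < p < 1 and 0 < q < 1, and let (e_k)_{k≥0} be the standard orthonormal basis of ℓ²(ℕ). Define bounded operators on ℓ²(ℕ): F₀⁽¹⁾e_k = (1−p^{k})e_k, F₁⁽¹⁾e_k = √(1−p^{k+1})e_{k+1}, F₀⁽²⁾e_k = e_k, F₁⁽²⁾e_k = √(1−q^{k+1})e_{k+1}. For i = 1, 2 set T⁽ⁱ⁾ := q·I + (1−q)·( I − F₀⁽ⁱ⁾ + F₁⁽ⁱ⁾(F₁⁽ⁱ⁾)* ). Then T⁽²⁾ − T⁽¹⁾ is a trace-class operator and Tr(T⁽²⁾ − T⁽¹⁾) = −1. (Equivalently: ρ₁(f₀) − ρ₁(f₁)ρ₁(f₁)* = 0, ρ₂(f₀) − ρ₂(f₁)ρ₂(f₁)* is the diagonal operator e_k ↦ q^{k}e_k with trace 1/(1−q), and the Chern–Connes pairing of the trace tr(f) = Tr(ρ₂(f) − ρ₁(f)) on O(S²_pq) with the idempotent E₋₁ equals −1.) -/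
open ContinuousLinearMap
open scoped InnerProductSpace

lemma inner_stdBasis_left (k : ℕ) (x : lp (fun _ : ℕ => ℂ) 2) : ⟪stdBasis k, x⟫_ℂ = x k := by
  unfold stdBasis
  rw [lp.inner_single_left]
  simp

lemma stdBasis_coord (k j : ℕ) : (stdBasis k : lp (fun _ : ℕ => ℂ) 2) j = if j = k then 1 else 0 := by
  unfold stdBasis
  rw [lp.coeFn_single]
  simp [Pi.single_apply]

lemma shift_adjoint (r : ℝ) (hr0 : 0 < r) (hr1 : r < 1)
    (F : lp (fun _ : ℕ => ℂ) 2 →L[ℂ] lp (fun _ : ℕ => ℂ) 2)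
    (h : ∀ k : ℕ, F (stdBasis k) = ((Real.sqrt (1 - r ^ (k + 1)) : ℝ) : ℂ) • stdBasis (k + 1))
    (k : ℕ) : F (adjoint F (stdBasis k)) = ((1 - r ^ k : ℝ) : ℂ) • stdBasis k := by
  have key : ∀ j, (adjoint F (stdBasis k)) j =
      if k = j + 1 then ((Real.sqrt (1 - r ^ (j + 1)) : ℝ) : ℂ) else 0 := by
    intro j
    rw [← inner_stdBasis_left, adjoint_inner_right, h, inner_smul_left, inner_stdBasis_left,
      stdBasis_coord]
    by_cases hj : k = j + 1
    · simp [hj]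
    · simp [hj, Ne.symm hj]
  cases k with
  | zero =>
    have : adjoint F (stdBasis 0) = 0 := by
      ext j
      rw [key]
      simp
    rw [this]
    simp
  | succ n =>
    have : adjoint F (stdBasis (n + 1)) =
        ((Real.sqrt (1 - r ^ (n + 1)) : ℝ) : ℂ) • stdBasis n := by
      ext j
      rw [key, lp.coeFn_smul, Pi.smul_apply, stdBasis_coord]
      by_cases hj : j = n
      · simp [hj]
      · simp [hj, Ne.symm hj]
    rw [this, map_smul, h, smul_smul, ← Complex.ofReal_mul, Real.mul_self_sqrt]
    have := pow_le_one₀ (n := n + 1) hr0.le hr1.le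
    linarith

/-- for the operators `T⁽ⁱ⁾ = q·I + (1−q)(I − F₀⁽ⁱ⁾ + F₁⁽ⁱ⁾(F₁⁽ⁱ⁾)*)` built from
the two infinite-dimensional irreducible representations of `O(S²_pq)`, the difference
`T⁽²⁾ − T⁽¹⁾` is diagonal in the standard basis, trace class (absolutely summable diagonal),
and its trace equals `−1`. -/
theorem stmt13 (p q : ℝ) (hp0 : 0 < p) (hp1 : p < 1) (hq0 : 0 < q) (hq1 : q < 1)
    (F01 F11 F02 F12 : lp (fun _ : ℕ => ℂ) 2 →L[ℂ] lp (fun _ : ℕ => ℂ) 2)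
    (h01 : ∀ k : ℕ, F01 (stdBasis k) = ((1 - p ^ k : ℝ) : ℂ) • stdBasis k)
    (h11 : ∀ k : ℕ, F11 (stdBasis k) = ((Real.sqrt (1 - p ^ (k + 1)) : ℝ) : ℂ) • stdBasis (k + 1))
    (h02 : ∀ k : ℕ, F02 (stdBasis k) = stdBasis k)
    (h12 : ∀ k : ℕ, F12 (stdBasis k) = ((Real.sqrt (1 - q ^ (k + 1)) : ℝ) : ℂ) • stdBasis (k + 1)) :
    (∀ k : ℕ,
      (((q : ℂ) • 1 + ((1 - q : ℝ) : ℂ) • (1 - F02 + F12 * adjoint F12)) -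
        ((q : ℂ) • 1 + ((1 - q : ℝ) : ℂ) • (1 - F01 + F11 * adjoint F11))) (stdBasis k) =
      ⟪stdBasis k,
        (((q : ℂ) • 1 + ((1 - q : ℝ) : ℂ) • (1 - F02 + F12 * adjoint F12)) -
          ((q : ℂ) • 1 + ((1 - q : ℝ) : ℂ) • (1 - F01 + F11 * adjoint F11))) (stdBasis k)⟫_ℂ •
        stdBasis k) ∧
    Summable (fun k : ℕ =>
      ‖⟪stdBasis k,
        (((q : ℂ) • 1 + ((1 - q : ℝ) : ℂ) • (1 - F02 + F12 * adjoint F12)) -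
          ((q : ℂ) • 1 + ((1 - q : ℝ) : ℂ) • (1 - F01 + F11 * adjoint F11))) (stdBasis k)⟫_ℂ‖) ∧
    ∑' k : ℕ,
      ⟪stdBasis k,
        (((q : ℂ) • 1 + ((1 - q : ℝ) : ℂ) • (1 - F02 + F12 * adjoint F12)) -
          ((q : ℂ) • 1 + ((1 - q : ℝ) : ℂ) • (1 - F01 + F11 * adjoint F11))) (stdBasis k)⟫_ℂ
      = -1 := by
  have hD : ∀ k : ℕ,
      (((q : ℂ) • 1 + ((1 - q : ℝ) : ℂ) • (1 - F02 + F12 * adjoint F12)) -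
        ((q : ℂ) • 1 + ((1 - q : ℝ) : ℂ) • (1 - F01 + F11 * adjoint F11))) (stdBasis k) =
      ((-(1 - q) * q ^ k : ℝ) : ℂ) • stdBasis k := by
    intro k
    have e1 : (F11 * adjoint F11) (stdBasis k) = _ := shift_adjoint p hp0 hp1 F11 h11 k
    have e2 : (F12 * adjoint F12) (stdBasis k) = _ := shift_adjoint q hq0 hq1 F12 h12 k
    have e3 : (1 : lp (fun _ : ℕ => ℂ) 2 →L[ℂ] lp (fun _ : ℕ => ℂ) 2) (stdBasis k) = stdBasis k := rfl
    simp only [sub_apply, add_apply, smul_apply, h01, h02, e1, e2, e3]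
    push_cast
    module
  have hI : ∀ k : ℕ, ⟪stdBasis k,
        (((q : ℂ) • 1 + ((1 - q : ℝ) : ℂ) • (1 - F02 + F12 * adjoint F12)) -
          ((q : ℂ) • 1 + ((1 - q : ℝ) : ℂ) • (1 - F01 + F11 * adjoint F11))) (stdBasis k)⟫_ℂ =
      ((-(1 - q) * q ^ k : ℝ) : ℂ) := by
    intro k
    rw [hD, inner_smul_right, inner_stdBasis_left, stdBasis_coord]
    simp
  refine ⟨fun k => by rw [hI, hD], ?_, ?_⟩
  · simp only [hI, Complex.norm_real]
    exact ((summable_geometric_of_lt_one hq0.le hq1).mul_left _).norm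
  · simp only [hI]
    rw [← Complex.ofReal_tsum, tsum_mul_left, tsum_geometric_of_lt_one hq0.le hq1, neg_mul,
      mul_inv_cancel₀ (by linarith)]
    simp
end

section
/- For all real numbers p, q, μ with 0 < p < 1, 0 < q < 1, 0 < μ < 1 and every real c > 0, there is no *-algebra isomorphism between O(S²_pq) and the Podleś sphere coordinate algebra O(S²_μc). -/
noncomputable section

namespace S2comparison

/-- Free unital ℂ-algebra on the three generators `f₀, f₁, f₁*` of `O(S²_pq)`. -/
abbrev FS := FreeAlgebra ℂ (Fin 3)

/-- The generator `f₀` (self-adjoint). -/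
def F0 : FS := FreeAlgebra.ι ℂ 0
/-- The generator `f₁`. -/
def F1 : FS := FreeAlgebra.ι ℂ 1
/-- The generator `f₁*`. -/
def F1' : FS := FreeAlgebra.ι ℂ 2

/-- The defining relations of the universal `*`-algebra `O(S²_pq)` (together with their
images under the involution):
`f₁*f₁ − q·f₁f₁* = (p−q)·f₀ + (1−p)·1`, `f₀f₁ − p·f₁f₀ = (1−p)·f₁` (and its star),
`(1−f₀)(f₁f₁* − f₀) = 0` (and its star). -/
inductive RelS2 (p q : ℝ) : FS → FS → Prop
  | r1 : RelS2 p q (F1' * F1) ((q : ℂ) • (F1 * F1') + ((p - q : ℝ) : ℂ) • F0 +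
      ((1 - p : ℝ) : ℂ) • 1)
  | r2 : RelS2 p q (F0 * F1) ((p : ℂ) • (F1 * F0) + ((1 - p : ℝ) : ℂ) • F1)
  | r2star : RelS2 p q (F1' * F0) ((p : ℂ) • (F0 * F1') + ((1 - p : ℝ) : ℂ) • F1')
  | r3 : RelS2 p q ((1 - F0) * (F1 * F1' - F0)) 0
  | r3star : RelS2 p q ((F1 * F1' - F0) * (1 - F0)) 0

/-- The coordinate `*`-algebra `O(S²_pq)`. -/
abbrev OS2 (p q : ℝ) := RingQuot (RelS2 p q)

/-- `f₀ ∈ O(S²_pq)`. -/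
def f0 (p q : ℝ) : OS2 p q := RingQuot.mkAlgHom ℂ (RelS2 p q) F0
/-- `f₁ ∈ O(S²_pq)`. -/
def f1 (p q : ℝ) : OS2 p q := RingQuot.mkAlgHom ℂ (RelS2 p q) F1
/-- `f₁* ∈ O(S²_pq)`. -/
def f1' (p q : ℝ) : OS2 p q := RingQuot.mkAlgHom ℂ (RelS2 p q) F1'

/-- Free unital ℂ-algebra on the three generators `A, B, B*` of the Podleś sphere. -/
abbrev FP := FreeAlgebra ℂ (Fin 3)

/-- The generator `A` (self-adjoint). -/
def PA : FP := FreeAlgebra.ι ℂ 0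
/-- The generator `B`. -/
def PB : FP := FreeAlgebra.ι ℂ 1
/-- The generator `B*`. -/
def PB' : FP := FreeAlgebra.ι ℂ 2

/-- The defining relations of the Podleś sphere `O(S²_μc)` (with the star of the
`BA = μ²AB` relation included): `BA = μ²·AB`, `AB* = μ²·B*A`, `B*B = A − A² + c·1`,
`BB* = μ²·A − μ⁴·A² + c·1`. -/
inductive RelP (μ c : ℝ) : FP → FP → Prop
  | rba : RelP μ c (PB * PA) (((μ ^ 2 : ℝ) : ℂ) • (PA * PB))
  | rab' : RelP μ c (PA * PB') (((μ ^ 2 : ℝ) : ℂ) • (PB' * PA))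
  | rb'b : RelP μ c (PB' * PB) (PA - PA * PA + ((c : ℝ) : ℂ) • 1)
  | rbb' : RelP μ c (PB * PB') (((μ ^ 2 : ℝ) : ℂ) • PA - ((μ ^ 4 : ℝ) : ℂ) • (PA * PA) +
      ((c : ℝ) : ℂ) • 1)

/-- The coordinate `*`-algebra `O(S²_μc)` of the Podleś quantum sphere. -/
abbrev OP (μ c : ℝ) := RingQuot (RelP μ c)

/-- `A ∈ O(S²_μc)`. -/
def pa (μ c : ℝ) : OP μ c := RingQuot.mkAlgHom ℂ (RelP μ c) PA
/-- `B ∈ O(S²_μc)`. -/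
def pb (μ c : ℝ) : OP μ c := RingQuot.mkAlgHom ℂ (RelP μ c) PB
/-- `B* ∈ O(S²_μc)`. -/
def pb' (μ c : ℝ) : OP μ c := RingQuot.mkAlgHom ℂ (RelP μ c) PB'

section helpers
open Polynomial

/-- weighted shift representation data -/
def wA (a : ℕ → ℂ) : Module.End ℂ (ℕ → ℂ) where
  toFun v n := a n * v n
  map_add' x y := by ext n; simp [mul_add]
  map_smul' x y := by ext n; simp; ring

def wB (a : ℕ → ℂ) : Module.End ℂ (ℕ → ℂ) where
  toFun v n := a n * v (n - 1)
  map_add' x y := by ext n; simp [mul_add]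
  map_smul' x y := by ext n; simp; ring

def wS : Module.End ℂ (ℕ → ℂ) where
  toFun v n := v (n + 1)
  map_add' x y := by ext n; simp
  map_smul' x y := by ext n; simp

def gens (R : Type) (x y z : R) : Fin 3 → R := ![x, y, z]

/-- First representation: `f₁ f₁* = f₀`. -/
def rep1 (p q : ℝ) : OS2 p q →ₐ[ℂ] Module.End ℂ (ℕ → ℂ) :=
  RingQuot.liftAlgHom ℂ ⟨FreeAlgebra.lift ℂ
    ![wA fun n => 1 - (p : ℂ) ^ n, wB fun n => 1 - (p : ℂ) ^ n, wS], by
    intro x y h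
    induction h <;> ext v n <;> rcases n with _ | n <;>
      simp only [map_mul, map_smul, map_add, map_sub, map_one, map_zero] <;>
      simp [F0, F1, F1', wA, wB, wS, pow_succ] <;> ring⟩

/-- Second representation: `f₀ = 1`. -/
def rep2 (p q : ℝ) : OS2 p q →ₐ[ℂ] Module.End ℂ (ℕ → ℂ) :=
  RingQuot.liftAlgHom ℂ ⟨FreeAlgebra.lift ℂ
    ![1, wB fun n => 1 - (q : ℂ) ^ n, wS], by
    intro x y h
    induction h <;> ext v n <;> rcases n with _ | n <;>
      simp only [map_mul, map_smul, map_add, map_sub, map_one, map_zero] <;>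
      simp [F0, F1, F1', wA, wB, wS, pow_succ] <;> ring⟩

lemma ne1 (p q : ℝ) : (1 - f0 p q) ≠ 0 := by
  intro h
  have := congrArg (fun x => rep1 p q x (fun _ => 1) 0) h
  simp [rep1, f0, F0, wA] at this

lemma ne2 (p q : ℝ) : (f1 p q * f1' p q - f0 p q) ≠ 0 := by
  intro h
  have := congrArg (fun x => rep2 p q x (fun _ => 1) 0) h
  simp [rep2, f0, F0, f1, F1, f1', F1', wB, wS] at this

lemma zd (p q : ℝ) : (1 - f0 p q) * (f1 p q * f1' p q - f0 p q) = 0 := by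
  have := RingQuot.mkAlgHom_rel ℂ (RelS2.r3 (p := p) (q := q))
  simpa [f0, f1, f1'] using this

/-! Podleś side -/

abbrev M := ℤ →₀ ℂ[X]

def sg (s : ℂ) : ℂ[X] →ₐ[ℂ] ℂ[X] := aeval (C s * X)

lemma sg_inv (s t : ℂ) (h : s * t = 1) (f : ℂ[X]) : sg s (sg t f) = f := by
  have : (sg s).comp (sg t) = AlgHom.id ℂ _ := by
    ext1
    simp only [sg, AlgHom.comp_apply, aeval_X, map_mul, AlgHom.id_apply]
    rw [aeval_C]
    rw [← mul_assoc, Polynomial.algebraMap_eq, ← C_mul, mul_comm t s, h]; simp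
  exact DFunLike.congr_fun this f

lemma sg_ne (s t : ℂ) (h : s * t = 1) (f : ℂ[X]) (hf : f ≠ 0) : sg t f ≠ 0 := by
  intro h0
  apply hf
  rw [← sg_inv s t h f, h0, map_zero]

def u (c : ℝ) : ℂ[X] := X - X * X + C (c : ℂ)

lemma u_ne (c : ℝ) (hc : 0 < c) : u c ≠ 0 := by
  intro h
  have := congrArg (eval 0) h
  simp [u] at this
  exact hc.ne' this

def m2 (μ : ℝ) : ℂ := ((μ ^ 2 : ℝ) : ℂ)

def bet (μ c : ℝ) (n : ℤ) : ℂ[X] := if 0 ≤ n then 1 else sg (m2 μ) (u c)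
def gam (c : ℝ) (n : ℤ) : ℂ[X] := if n ≤ 0 then 1 else u c

def opA : Module.End ℂ M :=
  Finsupp.lsum ℂ fun n => (Finsupp.lsingle n : ℂ[X] →ₗ[ℂ] M) ∘ₗ LinearMap.mulLeft ℂ X
def opB (μ c : ℝ) : Module.End ℂ M :=
  Finsupp.lsum ℂ fun n => (Finsupp.lsingle (n + 1) : ℂ[X] →ₗ[ℂ] M) ∘ₗ
    LinearMap.mulLeft ℂ (bet μ c n) ∘ₗ (sg (m2 μ)).toLinearMap
def opB' (μ c : ℝ) : Module.End ℂ M :=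
  Finsupp.lsum ℂ fun n => (Finsupp.lsingle (n - 1) : ℂ[X] →ₗ[ℂ] M) ∘ₗ
    LinearMap.mulLeft ℂ (gam c n) ∘ₗ (sg (m2 μ)⁻¹).toLinearMap

@[simp] lemma opA_single (n : ℤ) (f : ℂ[X]) :
    opA (Finsupp.single n f) = Finsupp.single n (X * f) := by
  simp [opA]
@[simp] lemma opB_single (μ c : ℝ) (n : ℤ) (f : ℂ[X]) :
    opB μ c (Finsupp.single n f) = Finsupp.single (n + 1) (bet μ c n * sg (m2 μ) f) := by
  simp [opB]
@[simp] lemma opB'_single (μ c : ℝ) (n : ℤ) (f : ℂ[X]) :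
    opB' μ c (Finsupp.single n f) = Finsupp.single (n - 1) (gam c n * sg (m2 μ)⁻¹ f) := by
  simp [opB']

lemma m2_ne {μ : ℝ} (h : 0 < μ) : m2 μ ≠ 0 := by
  simp [m2, h.ne']

lemma sg_X (s : ℂ) : sg s X = C s * X := by simp [sg]
lemma sg_C (s t : ℂ) : sg s (C t) = C t := by simp [sg]

lemma sg_u (μ c : ℝ) : sg (m2 μ) (u c) =
    C (m2 μ) * X - C (((μ ^ 4 : ℝ) : ℂ)) * (X * X) + C (c : ℂ) := by
  have : ((μ ^ 4 : ℝ) : ℂ) = m2 μ * m2 μ := by simp [m2]; ring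
  rw [this]
  simp only [u, map_add, map_sub, map_mul, sg_X, sg_C]
  ring

def rho (μ c : ℝ) (hμ : 0 < μ) : OP μ c →ₐ[ℂ] Module.End ℂ M :=
  RingQuot.liftAlgHom ℂ ⟨FreeAlgebra.lift ℂ ![opA, opB μ c, opB' μ c], by
    have hm := m2_ne hμ
    intro x y h
    induction h
    · refine Finsupp.lhom_ext fun n f => ?_
      simp only [PA, PB, map_mul, map_smul, FreeAlgebra.lift_ι_apply]
      simp only [Matrix.cons_val, Module.End.mul_apply, LinearMap.smul_apply, opA_single,
        opB_single, Finsupp.smul_single, map_mul, sg_X]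
      congr 1
      rw [smul_eq_C_mul, m2]; ring
    · refine Finsupp.lhom_ext fun n f => ?_
      simp only [PA, PB', map_mul, map_smul, FreeAlgebra.lift_ι_apply]
      simp only [Matrix.cons_val, Module.End.mul_apply, LinearMap.smul_apply, opA_single,
        opB'_single, Finsupp.smul_single, map_mul, sg_X]
      congr 1
      rw [smul_eq_C_mul, ← m2]
      have : C (m2 μ) * C (m2 μ)⁻¹ = (1 : ℂ[X]) := by rw [← C_mul, mul_inv_cancel₀ hm, C_1]
      linear_combination (- gam c n * X * sg (m2 μ)⁻¹ f) * this
    · refine Finsupp.lhom_ext fun n f => ?_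
      simp only [PA, PB, PB', map_mul, map_smul, map_add, map_sub, map_one,
        FreeAlgebra.lift_ι_apply]
      simp only [Matrix.cons_val, Module.End.mul_apply, LinearMap.smul_apply, opA_single,
        LinearMap.add_apply, LinearMap.sub_apply, Module.End.one_apply,
        opB_single, opB'_single, Finsupp.smul_single, map_mul,
        ← Finsupp.single_sub, ← Finsupp.single_add, add_sub_cancel_right,
        sg_inv _ _ (inv_mul_cancel₀ hm)]
      congr 1
      rw [smul_eq_C_mul]
      have : gam c (n + 1) * sg (m2 μ)⁻¹ (bet μ c n) = u c := by
        rcases lt_or_ge n 0 with h | h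
        · rw [gam, bet, if_pos (by lia), if_neg (by lia), sg_inv _ _ (inv_mul_cancel₀ hm), one_mul]
        · rw [gam, bet, if_neg (by lia), if_pos (by lia), map_one, mul_one]
      rw [← mul_assoc, this, u]; ring
    · refine Finsupp.lhom_ext fun n f => ?_
      simp only [PA, PB, PB', map_mul, map_smul, map_add, map_sub, map_one,
        FreeAlgebra.lift_ι_apply]
      simp only [Matrix.cons_val, Module.End.mul_apply, LinearMap.smul_apply, opA_single,
        LinearMap.add_apply, LinearMap.sub_apply, Module.End.one_apply,
        opB_single, opB'_single, Finsupp.smul_single, map_mul,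
        ← Finsupp.single_sub, ← Finsupp.single_add, sub_add_cancel,
        sg_inv _ _ (mul_inv_cancel₀ hm)]
      congr 1
      simp only [smul_eq_C_mul]
      have : bet μ c (n - 1) * sg (m2 μ) (gam c n) = sg (m2 μ) (u c) := by
        rcases le_or_gt n 0 with h | h
        · rw [gam, bet, if_neg (by lia), if_pos (by lia), map_one, mul_one]
        · rw [gam, bet, if_pos (by lia), if_neg (by lia), one_mul]
      rw [← mul_assoc, this, sg_u, ← m2]; ring⟩

section rho
variable (μ c : ℝ) (hμ : 0 < μ)
lemma rho_a : rho μ c hμ (pa μ c) = opA := by simp [rho, pa, PA]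
lemma rho_b : rho μ c hμ (pb μ c) = opB μ c := by simp [rho, pb, PB]
lemma rho_b' : rho μ c hμ (pb' μ c) = opB' μ c := by simp [rho, pb', PB']
end rho

def b (μ c : ℝ) (n : ℤ) : OP μ c :=
  if 0 ≤ n then pb μ c ^ n.toNat else pb' μ c ^ (-n).toNat

def Psi (μ c : ℝ) : M →ₗ[ℂ] OP μ c :=
  Finsupp.lsum ℂ fun n => LinearMap.mulRight ℂ (b μ c n) ∘ₗ (aeval (pa μ c)).toLinearMap

lemma Psi_single (μ c : ℝ) (n : ℤ) (f : ℂ[X]) :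
    Psi μ c (Finsupp.single n f) = aeval (pa μ c) f * b μ c n := by simp [Psi]

lemma rel_ba (μ c : ℝ) : pb μ c * pa μ c = m2 μ • (pa μ c * pb μ c) := by
  have := RingQuot.mkAlgHom_rel ℂ (RelP.rba (μ := μ) (c := c))
  simp only [map_mul, map_smul] at this
  exact this
lemma rel_ab' (μ c : ℝ) : pa μ c * pb' μ c = m2 μ • (pb' μ c * pa μ c) := by
  have := RingQuot.mkAlgHom_rel ℂ (RelP.rab' (μ := μ) (c := c))
  simp only [map_mul, map_smul] at this
  exact this
lemma rel_b'b (μ c : ℝ) : pb' μ c * pb μ c = aeval (pa μ c) (u c) := by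
  have := RingQuot.mkAlgHom_rel ℂ (RelP.rb'b (μ := μ) (c := c))
  simp only [map_mul, map_smul, map_add, map_sub, map_one] at this
  simp only [u, map_add, map_sub, map_mul, aeval_X, aeval_C, Algebra.algebraMap_eq_smul_one]
  exact this
lemma rel_bb' (μ c : ℝ) : pb μ c * pb' μ c = aeval (pa μ c) (sg (m2 μ) (u c)) := by
  have := RingQuot.mkAlgHom_rel ℂ (RelP.rbb' (μ := μ) (c := c))
  simp only [map_mul, map_smul, map_add, map_sub, map_one] at this
  rw [sg_u]
  simp only [map_add, map_sub, map_mul, aeval_X, aeval_C, Algebra.algebraMap_eq_smul_one,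
    smul_one_mul]
  exact this

lemma comm_gen {R : Type*} [Ring R] [Algebra ℂ R] (a b : R) (s : ℂ) (h : b * a = s • (a * b))
    (f : ℂ[X]) : b * aeval a f = aeval a (sg s f) * b := by
  induction f using Polynomial.induction_on with
  | C t => simp [sg_C, aeval_C, Algebra.commutes]
  | add f g hf hg => simp only [map_add, mul_add, add_mul, hf, hg]
  | monomial n t ih =>
    rw [pow_succ, ← mul_assoc, map_mul, ← mul_assoc, ih, mul_assoc, aeval_X, h, map_mul (sg s) _ X, map_mul (aeval a) _ (sg s X),
      sg_X, map_mul (aeval a) (C s), aeval_X, aeval_C, Algebra.algebraMap_eq_smul_one]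
    simp only [smul_mul_assoc, mul_smul_comm, one_mul, mul_assoc]

lemma comm_b (μ c : ℝ) (f : ℂ[X]) :
    pb μ c * aeval (pa μ c) f = aeval (pa μ c) (sg (m2 μ) f) * pb μ c :=
  comm_gen _ _ _ (rel_ba μ c) f
lemma comm_b' (μ c : ℝ) (hμ : 0 < μ) (f : ℂ[X]) :
    pb' μ c * aeval (pa μ c) f = aeval (pa μ c) (sg (m2 μ)⁻¹ f) * pb' μ c := by
  apply comm_gen
  rw [rel_ab', smul_smul, inv_mul_cancel₀ (m2_ne hμ), one_smul]

lemma b_up (μ c : ℝ) (n : ℤ) : pb μ c * b μ c n = aeval (pa μ c) (bet μ c n) * b μ c (n + 1) := by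
  rcases lt_or_ge n 0 with h | h
  · have e1 : (-n).toNat = (-(n+1)).toNat + 1 := by lia
    have e2 : b μ c (n + 1) = pb' μ c ^ (-(n+1)).toNat := by
      rw [b]; split_ifs with h'
      · have : n = -1 := by lia
        subst this; simp
      · rfl
    rw [e2, b, bet, if_neg (by lia), if_neg (by lia), e1, pow_succ', ← mul_assoc, rel_bb']
  · have e1 : (n + 1).toNat = n.toNat + 1 := by lia
    rw [b, b, bet, if_pos h, if_pos h, if_pos (by lia), e1, pow_succ', map_one, one_mul]

lemma b_down (μ c : ℝ) (n : ℤ) :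
    pb' μ c * b μ c n = aeval (pa μ c) (gam c n) * b μ c (n - 1) := by
  rcases le_or_gt n 0 with h | h
  · have e1 : (-(n - 1)).toNat = (-n).toNat + 1 := by lia
    have e2 : b μ c n = pb' μ c ^ (-n).toNat := by
      rw [b]; split_ifs with h'
      · have : n = 0 := by lia
        subst this; simp
      · rfl
    rw [e2, b, gam, if_pos h, if_neg (by lia), e1, pow_succ', map_one, one_mul]
  · have e1 : n.toNat = (n - 1).toNat + 1 := by lia
    rw [b, b, gam, if_pos (by lia : 0 ≤ n), if_neg (by lia : ¬ n ≤ 0), if_pos (by lia : 0 ≤ n - 1), e1, pow_succ', ← mul_assoc,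
      rel_b'b]

lemma inter_gen (μ c : ℝ) (T : Module.End ℂ M) (x : OP μ c)
    (h : ∀ n f, Psi μ c (T (Finsupp.single n f)) = x * Psi μ c (Finsupp.single n f)) (m : M) :
    Psi μ c (T m) = x * Psi μ c m := by
  have : Psi μ c ∘ₗ T = LinearMap.mulLeft ℂ x ∘ₗ Psi μ c :=
    Finsupp.lhom_ext fun n f => by simpa using h n f
  exact LinearMap.congr_fun this m

lemma inter (μ c : ℝ) (hμ : 0 < μ) (x : OP μ c) :
    ∀ m, Psi μ c (rho μ c hμ x m) = x * Psi μ c m := by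
  obtain ⟨y, rfl⟩ := RingQuot.mkAlgHom_surjective ℂ (RelP μ c) x
  induction y using FreeAlgebra.induction with
  | grade0 r => intro m; simp [Algebra.algebraMap_eq_smul_one]
  | grade1 i =>
    fin_cases i
    · change ∀ m, Psi μ c (rho μ c hμ (pa μ c) m) = pa μ c * Psi μ c m
      rw [rho_a]
      refine inter_gen _ _ _ _ fun n f => ?_
      rw [opA_single, Psi_single, Psi_single, map_mul, aeval_X, mul_assoc]
    · change ∀ m, Psi μ c (rho μ c hμ (pb μ c) m) = pb μ c * Psi μ c m
      rw [rho_b]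
      refine inter_gen _ _ _ _ fun n f => ?_
      rw [opB_single, Psi_single, Psi_single, ← mul_assoc, comm_b, mul_assoc, b_up, ← mul_assoc,
        ← map_mul, mul_comm (bet μ c n)]
    · change ∀ m, Psi μ c (rho μ c hμ (pb' μ c) m) = pb' μ c * Psi μ c m
      rw [rho_b']
      refine inter_gen _ _ _ _ fun n f => ?_
      rw [opB'_single, Psi_single, Psi_single, ← mul_assoc, comm_b' _ _ hμ, mul_assoc, b_down,
        ← mul_assoc, ← map_mul, mul_comm (gam c n)]
  | mul x y hx hy => intro m; rw [map_mul, map_mul, Module.End.mul_apply, hx, hy, mul_assoc]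
  | add x y hx hy => intro m; rw [map_add, map_add, LinearMap.add_apply, map_add, hx, hy, add_mul]

lemma Psi_one (μ c : ℝ) (hμ : 0 < μ) (x : OP μ c) :
    Psi μ c (rho μ c hμ x (Finsupp.single 0 1)) = x := by
  rw [inter, Psi_single]; simp [b]

lemma rho_aeval (μ c : ℝ) (hμ : 0 < μ) (f g : ℂ[X]) (n : ℤ) :
    rho μ c hμ (aeval (pa μ c) f) (Finsupp.single n g) = Finsupp.single n (f * g) := by
  rw [← Polynomial.aeval_algHom_apply, rho_a]
  induction f using Polynomial.induction_on generalizing g with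
  | C t => simp [aeval_C, Algebra.algebraMap_eq_smul_one, smul_eq_C_mul]
  | add f g hf hg => simp only [map_add, LinearMap.add_apply, hf, hg, add_mul, Finsupp.single_add]
  | monomial k t ih =>
    rw [pow_succ, ← mul_assoc, map_mul, aeval_X, Module.End.mul_apply, opA_single, ih]
    congr 1; ring

lemma bet_ne (μ c : ℝ) (hμ : 0 < μ) (hc : 0 < c) (n : ℤ) : bet μ c n ≠ 0 := by
  rw [bet]; split_ifs
  · exact one_ne_zero
  · exact sg_ne _ _ (inv_mul_cancel₀ (m2_ne hμ)) _ (u_ne c hc)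
lemma gam_ne (c : ℝ) (hc : 0 < c) (n : ℤ) : gam c n ≠ 0 := by
  rw [gam]; split_ifs
  · exact one_ne_zero
  · exact u_ne c hc

lemma pow_b (μ c : ℝ) (hμ : 0 < μ) (hc : 0 < c) (k : ℕ) (m : ℤ) (g : ℂ[X]) :
    ∃ h, (g ≠ 0 → h ≠ 0) ∧
      (opB μ c ^ k) (Finsupp.single m g) = Finsupp.single (m + k) h := by
  induction k with
  | zero => exact ⟨g, id, by simp⟩
  | succ k ih =>
    obtain ⟨h, h0, h1⟩ := ih
    refine ⟨bet μ c (m + k) * sg (m2 μ) h, fun hg => mul_ne_zero (bet_ne μ c hμ hc _)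
      (sg_ne _ _ (inv_mul_cancel₀ (m2_ne hμ)) _ (h0 hg)), ?_⟩
    rw [pow_succ', Module.End.mul_apply, h1, opB_single]
    congr 1; push_cast; ring

lemma pow_b' (μ c : ℝ) (hμ : 0 < μ) (hc : 0 < c) (k : ℕ) (m : ℤ) (g : ℂ[X]) :
    ∃ h, (g ≠ 0 → h ≠ 0) ∧
      (opB' μ c ^ k) (Finsupp.single m g) = Finsupp.single (m - k) h := by
  induction k with
  | zero => exact ⟨g, id, by simp⟩
  | succ k ih =>
    obtain ⟨h, h0, h1⟩ := ih
    refine ⟨gam c (m - k) * sg (m2 μ)⁻¹ h, fun hg => mul_ne_zero (gam_ne c hc _)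
      (sg_ne _ _ (mul_inv_cancel₀ (m2_ne hμ)) _ (h0 hg)), ?_⟩
    rw [pow_succ', Module.End.mul_apply, h1, opB'_single]
    congr 1; push_cast; ring

lemma T_single (μ c : ℝ) (hμ : 0 < μ) (hc : 0 < c) (n m : ℤ) (f g : ℂ[X]) :
    ∃ h, (f ≠ 0 → g ≠ 0 → h ≠ 0) ∧
      rho μ c hμ (Psi μ c (Finsupp.single n f)) (Finsupp.single m g) =
        Finsupp.single (n + m) h := by
  have key : ∃ h, (g ≠ 0 → h ≠ 0) ∧
      rho μ c hμ (b μ c n) (Finsupp.single m g) = Finsupp.single (n + m) h := by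
    rw [b]; split_ifs with hn
    · obtain ⟨h, h0, h1⟩ := pow_b μ c hμ hc n.toNat m g
      refine ⟨h, h0, ?_⟩
      rw [map_pow, rho_b, h1]
      congr 1; lia
    · obtain ⟨h, h0, h1⟩ := pow_b' μ c hμ hc (-n).toNat m g
      refine ⟨h, h0, ?_⟩
      rw [map_pow, rho_b', h1]
      congr 1; lia
  obtain ⟨h, h0, h1⟩ := key
  refine ⟨f * h, fun hf hg => mul_ne_zero hf (h0 hg), ?_⟩
  rw [Psi_single, map_mul, Module.End.mul_apply, h1, rho_aeval]

lemma T_expand (μ c : ℝ) (hμ : 0 < μ) (x y : M) (k : ℤ) :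
    rho μ c hμ (Psi μ c x) y k = ∑ n ∈ x.support, ∑ m ∈ y.support,
      rho μ c hμ (Psi μ c (Finsupp.single n (x n))) (Finsupp.single m (y m)) k := by
  conv_lhs => rw [← Finsupp.sum_single x, ← Finsupp.sum_single y]
  simp only [Finsupp.sum, map_sum, LinearMap.sum_apply, Finsupp.finset_sum_apply]
  rw [Finset.sum_comm]

lemma T_ne (μ c : ℝ) (hμ : 0 < μ) (hc : 0 < c) (x y : M) (hx : x ≠ 0) (hy : y ≠ 0) :
    rho μ c hμ (Psi μ c x) y ≠ 0 := by
  have hxs := Finsupp.support_nonempty_iff.2 hx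
  have hys := Finsupp.support_nonempty_iff.2 hy
  set N := x.support.max' hxs with hN
  set K := y.support.max' hys with hK
  have hNm : N ∈ x.support := Finset.max'_mem _ _
  have hKm : K ∈ y.support := Finset.max'_mem _ _
  have off : ∀ n ∈ x.support, ∀ m ∈ y.support, (n ≠ N ∨ m ≠ K) →
      rho μ c hμ (Psi μ c (Finsupp.single n (x n))) (Finsupp.single m (y m)) (N + K) = 0 := by
    intro n hn m hm hne
    obtain ⟨h, -, h1⟩ := T_single μ c hμ hc n m (x n) (y m)
    have := Finset.le_max' _ _ hn
    have := Finset.le_max' _ _ hm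
    rw [h1, Finsupp.single_eq_of_ne]
    lia
  intro h0
  have := T_expand μ c hμ x y (N + K)
  rw [h0, Finset.sum_eq_single_of_mem N hNm
    (fun n hn hne => Finset.sum_eq_zero fun m hm => off n hn m hm (Or.inl hne)),
    Finset.sum_eq_single_of_mem K hKm (fun m hm hne => off N hNm m hm (Or.inr hne))] at this
  obtain ⟨h, h2, h1⟩ := T_single μ c hμ hc N K (x N) (y K)
  rw [h1, Finsupp.single_eq_same] at this
  exact h2 (Finsupp.mem_support_iff.1 hNm) (Finsupp.mem_support_iff.1 hKm) this.symm

/-- The Podleś sphere algebra has no zero divisors. -/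
lemma OP_nzd (μ c : ℝ) (hμ : 0 < μ) (hc : 0 < c) (x y : OP μ c) (hx : x ≠ 0) (hy : y ≠ 0) :
    x * y ≠ 0 := by
  intro h
  have h1 : ∀ z : OP μ c, z ≠ 0 → rho μ c hμ z (Finsupp.single 0 1) ≠ 0 := by
    intro z hz h0
    apply hz
    rw [← Psi_one μ c hμ z, h0, map_zero]
  apply T_ne μ c hμ hc _ _ (h1 x hx) (h1 y hy)
  rw [Psi_one, ← Module.End.mul_apply, ← map_mul, h, map_zero, LinearMap.zero_apply]

end helpers

/-- for all `0 < p,q,μ < 1` and `c > 0` there is no `*`-algebra isomorphism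
between `O(S²_pq)` and the Podleś sphere algebra `O(S²_μc)`: there is no triple consisting
of the two (canonical) involutions and a unital ℂ-algebra isomorphism intertwining them. -/
theorem stmt18 (p q μ c : ℝ) (hp0 : 0 < p) (hp1 : p < 1) (hq0 : 0 < q) (hq1 : q < 1)
    (hμ0 : 0 < μ) (hμ1 : μ < 1) (hc : 0 < c) :
    ¬ ∃ (φ : OS2 p q ≃ₐ[ℂ] OP μ c)
        (st₁ : OS2 p q → OS2 p q) (st₂ : OP μ c → OP μ c),
      (∀ x y, st₁ (x + y) = st₁ x + st₁ y) ∧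
      (∀ (z : ℂ) x, st₁ (z • x) = (starRingEnd ℂ) z • st₁ x) ∧
      (∀ x y, st₁ (x * y) = st₁ y * st₁ x) ∧
      (∀ x, st₁ (st₁ x) = x) ∧
      st₁ (f0 p q) = f0 p q ∧ st₁ (f1 p q) = f1' p q ∧
      (∀ x y, st₂ (x + y) = st₂ x + st₂ y) ∧
      (∀ (z : ℂ) x, st₂ (z • x) = (starRingEnd ℂ) z • st₂ x) ∧
      (∀ x y, st₂ (x * y) = st₂ y * st₂ x) ∧
      (∀ x, st₂ (st₂ x) = x) ∧
      st₂ (pa μ c) = pa μ c ∧ st₂ (pb μ c) = pb' μ c ∧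
      (∀ x, φ (st₁ x) = st₂ (φ x)) := by
  rintro ⟨φ, -⟩
  refine OP_nzd μ c hμ0 hc (φ (1 - f0 p q)) (φ (f1 p q * f1' p q - f0 p q)) ?_ ?_ ?_
  · exact fun h => ne1 p q ((map_eq_zero_iff φ φ.injective).1 h)
  · exact fun h => ne2 p q ((map_eq_zero_iff φ φ.injective).1 h)
  · rw [← map_mul, zd, map_zero]


end S2comparison
end
end
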